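/- arXiv:2403.18559 — 5 statements merged into one kernel-verified Lean document; each statement's English description precedes it below -/
import Mathlib

section
/- There exists a sequence of smooth radial functions (η_k)_{k≥2}, η_k : ℝ² → ℝ, such that for every k: 0 ≤ η_k ≤ 1 on ℝ², η_k ≡ 1 on the open ball of radius 1/k centered at 0, and η_k vanishes outside the closed ball of radius 1/√k centered at 0; moreover, as k → ∞, η_k → 0 pointwise almost everywhere, ‖η_k‖_{L^p(ℝ²)} → 0 for every 1 ≤ p < ∞, and ∫_{ℝ²} ‖∇η_k(x)‖² dx → 0. -/
open MeasureTheory Filter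

/-- The logarithmic cut-off. -/
noncomputable def cutEta (k : ℕ) (x : EuclideanSpace ℝ (Fin 2)) : ℝ :=
  if x = 0 then 1 else Real.smoothTransition (-1 - Real.log (‖x‖ ^ 2) / Real.log k)

lemma smoothTransition_deriv_bound : ∃ C : ℝ, 0 ≤ C ∧ ∀ t, |deriv Real.smoothTransition t| ≤ C := by
  have hc : Continuous (deriv Real.smoothTransition) :=
    (Real.smoothTransition.contDiff (n := 1)).continuous_deriv le_rfl
  obtain ⟨C, hC⟩ := (isCompact_Icc (a := (0:ℝ)) (b := 1)).exists_bound_of_continuousOn hc.continuousOn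
  refine ⟨max C 0, le_max_right _ _, fun t => ?_⟩
  by_cases h0 : t < 0
  · have : Real.smoothTransition =ᶠ[nhds t] fun _ => 0 := by
      filter_upwards [Iio_mem_nhds h0] with s hs
      exact Real.smoothTransition.zero_of_nonpos (le_of_lt hs)
    rw [this.deriv_eq]; simp
  by_cases h1 : 1 < t
  · have : Real.smoothTransition =ᶠ[nhds t] fun _ => 1 := by
      filter_upwards [Ioi_mem_nhds h1] with s hs
      exact Real.smoothTransition.one_of_one_le (le_of_lt hs)
    rw [this.deriv_eq]; simp
  exact (hC t ⟨not_lt.1 h0, not_lt.1 h1⟩).trans (le_max_left _ _)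

lemma cutEta_one {k : ℕ} (hk : 2 ≤ k) (x : EuclideanSpace ℝ (Fin 2)) (hx : ‖x‖ < 1 / (k : ℝ)) :
    cutEta k x = 1 := by
  unfold cutEta
  split_ifs with h
  · rfl
  apply Real.smoothTransition.one_of_one_le
  have hk' : (1:ℝ) < k := by exact_mod_cast hk
  have hl : 0 < Real.log k := Real.log_pos hk'
  have hx0 : 0 < ‖x‖ := norm_pos_iff.2 h
  have : Real.log ‖x‖ ≤ - Real.log k := by
    rw [← Real.log_inv]; exact Real.log_le_log hx0 (by simpa using hx.le)
  rw [Real.log_pow]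
  have : ((2:ℕ):ℝ) * Real.log ‖x‖ / Real.log k ≤ -2 := by
    rw [div_le_iff₀ hl]; push_cast; linarith
  linarith

lemma cutEta_zero {k : ℕ} (hk : 2 ≤ k) (x : EuclideanSpace ℝ (Fin 2))
    (hx : 1 / Real.sqrt (k : ℝ) < ‖x‖) : cutEta k x = 0 := by
  have hk' : (1:ℝ) < k := by exact_mod_cast hk
  have hl : 0 < Real.log k := Real.log_pos hk'
  have hp : 0 < 1 / Real.sqrt (k : ℝ) := by positivity
  have hx0 : 0 < ‖x‖ := hp.trans hx
  have h : x ≠ 0 := norm_pos_iff.1 hx0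
  rw [cutEta, if_neg h]
  apply Real.smoothTransition.zero_of_nonpos
  have : - Real.log k ≤ Real.log (‖x‖ ^ 2) := by
    rw [← Real.log_inv]; apply Real.log_le_log (by positivity)
    calc (k:ℝ)⁻¹ = (1 / Real.sqrt (k : ℝ)) ^ 2 := by
          rw [div_pow, Real.sq_sqrt (by positivity)]; simp
      _ ≤ _ := by gcongr
  have : -1 ≤ Real.log (‖x‖ ^ 2) / Real.log k := by
    rw [le_div_iff₀ hl]; linarith
  linarith

lemma cutEta_range (k : ℕ) (x : EuclideanSpace ℝ (Fin 2)) : 0 ≤ cutEta k x ∧ cutEta k x ≤ 1 := by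
  unfold cutEta
  split_ifs
  · simp
  · exact ⟨Real.smoothTransition.nonneg _, Real.smoothTransition.le_one _⟩

lemma cutEta_eventually (k : ℕ) {x : EuclideanSpace ℝ (Fin 2)} (hx : x ≠ 0) :
    cutEta k =ᶠ[nhds x] fun y => Real.smoothTransition (-1 - Real.log (‖y‖ ^ 2) / Real.log k) := by
  filter_upwards [isOpen_ne.mem_nhds hx] with y hy
  rw [cutEta, if_neg hy]

lemma cutEta_contDiff {k : ℕ} (hk : 2 ≤ k) : ContDiff ℝ (⊤ : ℕ∞) (cutEta k) := by
  rw [contDiff_iff_contDiffAt]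
  intro x
  by_cases hx : x = 0
  · subst hx
    have : cutEta k =ᶠ[nhds 0] fun _ => 1 := by
      have hk' : (0:ℝ) < 1 / k := by positivity
      filter_upwards [Metric.ball_mem_nhds _ hk'] with y hy
      exact cutEta_one hk y (by simpa using hy)
    exact contDiffAt_const.congr_of_eventuallyEq this
  · refine ContDiffAt.congr_of_eventuallyEq ?_ (cutEta_eventually k hx)
    apply Real.smoothTransition.contDiffAt.comp x
    apply contDiffAt_const.sub
    apply ContDiffAt.div_const
    apply ContDiffAt.log
    · exact (contDiff_norm_sq ℝ).contDiffAt
    · simpa using hx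

lemma cutEta_fderiv_le {C : ℝ} (hC0 : 0 ≤ C) (hC : ∀ t, |deriv Real.smoothTransition t| ≤ C)
    {k : ℕ} (hk : 2 ≤ k) (x : EuclideanSpace ℝ (Fin 2)) :
    ‖fderiv ℝ (cutEta k) x‖ ^ 2 ≤
      (Set.Icc (1 / (k:ℝ)) (1 / Real.sqrt k)).indicator
        (fun r => (2 * C / Real.log k) ^ 2 * (r ^ 2)⁻¹) ‖x‖ := by
  have hk' : (1:ℝ) < k := by exact_mod_cast hk
  have hl : 0 < Real.log k := Real.log_pos hk'
  by_cases h1 : ‖x‖ < 1 / (k:ℝ)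
  · have : cutEta k =ᶠ[nhds x] fun _ => 1 := by
      filter_upwards [(isOpen_Iio.preimage continuous_norm).mem_nhds h1] with y hy
      exact cutEta_one hk y hy
    rw [this.fderiv_eq, Set.indicator_of_notMem (by simp; intro h; simp at h1; linarith)]
    simp
  by_cases h2 : 1 / Real.sqrt k < ‖x‖
  · have : cutEta k =ᶠ[nhds x] fun _ => 0 := by
      filter_upwards [(isOpen_Ioi.preimage continuous_norm).mem_nhds h2] with y hy
      exact cutEta_zero hk y hy
    rw [this.fderiv_eq, Set.indicator_of_notMem (fun h => by linarith [h.2])]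
    simp
  have hm : ‖x‖ ∈ Set.Icc (1 / (k:ℝ)) (1 / Real.sqrt k) := ⟨not_lt.1 h1, not_lt.1 h2⟩
  rw [Set.indicator_of_mem hm]
  have hx0 : 0 < ‖x‖ := lt_of_lt_of_le (by positivity) (not_lt.1 h1)
  have hx : x ≠ 0 := norm_pos_iff.1 hx0
  rw [(cutEta_eventually k hx).fderiv_eq]
  have hd : HasFDerivAt (fun y : EuclideanSpace ℝ (Fin 2) => -1 - Real.log (‖y‖ ^ 2) / Real.log k)
      (-((Real.log k)⁻¹ • ((‖x‖^2)⁻¹ • (2 • (innerSL ℝ x))))) x := by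
    have h := ((hasStrictFDerivAt_norm_sq x).hasFDerivAt).log (by positivity)
    have h' := (h.mul_const (Real.log k)⁻¹).const_sub (-1)
    simpa only [div_eq_mul_inv] using h'
  have hS : HasDerivAt Real.smoothTransition _ (-1 - Real.log (‖x‖ ^ 2) / Real.log k) :=
    ((Real.smoothTransition.contDiff (n := 1)).differentiable one_ne_zero _).hasDerivAt
  have := (hS.comp_hasFDerivAt x hd).fderiv
  simp only [Function.comp_def] at this
  rw [this]
  have e : (2 * C / Real.log k) ^ 2 * (‖x‖ ^ 2)⁻¹ = (C * ((Real.log k)⁻¹ * ((‖x‖^2)⁻¹ * (2 * ‖x‖)))) ^ 2 := by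
    field_simp
  rw [e]
  have e2 : ‖(2 • (innerSL ℝ x) : EuclideanSpace ℝ (Fin 2) →L[ℝ] ℝ)‖ = 2 * ‖x‖ := by
    rw [← Nat.cast_smul_eq_nsmul ℝ, norm_smul, innerSL_apply_norm]; norm_num
  rw [norm_smul, norm_neg, norm_smul, norm_smul, e2, Real.norm_of_nonneg (inv_nonneg.2 hl.le),
    Real.norm_of_nonneg (by positivity : 0 ≤ (‖x‖^2)⁻¹), Real.norm_eq_abs]
  gcongr
  exact hC _

lemma tendsto_inv_sqrt_nat : Tendsto (fun k : ℕ => 1 / Real.sqrt (k:ℝ)) atTop (nhds 0) := by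
  have := (tendsto_inv_atTop_zero.comp Real.tendsto_sqrt_atTop).comp
    (tendsto_natCast_atTop_atTop (R := ℝ))
  simpa [Function.comp_def] using this

lemma cutEta_grad {C : ℝ} (hC0 : 0 ≤ C) (hC : ∀ t, |deriv Real.smoothTransition t| ≤ C)
    {k : ℕ} (hk : 2 ≤ k) :
    ∫ x : EuclideanSpace ℝ (Fin 2), ‖fderiv ℝ (cutEta k) x‖ ^ 2 ≤
      (2 * volume.real (Metric.ball (0 : EuclideanSpace ℝ (Fin 2)) 1) * (2 * C) ^ 2) *
        (Real.log k)⁻¹ := by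
  have hk' : (1:ℝ) < k := by exact_mod_cast hk
  have hl : 0 < Real.log k := Real.log_pos hk'
  have hk0 : 0 < 1 / (k:ℝ) := by positivity
  have hs0 : 0 < 1 / Real.sqrt (k:ℝ) := by positivity
  have hle : 1 / (k:ℝ) ≤ 1 / Real.sqrt k := by
    apply one_div_le_one_div_of_le (by positivity)
    rw [Real.sqrt_le_left (by positivity)]; nlinarith
  set A := (2 * C / Real.log k) ^ 2 with hA
  set g : ℝ → ℝ := (Set.Icc (1 / (k:ℝ)) (1 / Real.sqrt k)).indicator (fun r => A * (r ^ 2)⁻¹)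
    with hg
  have hyg : (fun y : ℝ => y ^ (Module.finrank ℝ (EuclideanSpace ℝ (Fin 2)) - 1) • g y)
      = (Set.Icc (1 / (k:ℝ)) (1 / Real.sqrt k)).indicator (fun r => A * r⁻¹) := by
    funext y
    simp only [hg, finrank_euclideanSpace, Fintype.card_fin, Set.indicator]
    split_ifs with h
    · have : 0 < y := hk0.trans_le h.1
      simp; field_simp
    · simp
  have hint0 : IntegrableOn (fun r : ℝ => A * r⁻¹) (Set.Icc (1 / (k:ℝ)) (1 / Real.sqrt k)) := by
    apply ContinuousOn.integrableOn_Icc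
    apply continuousOn_const.mul
    exact continuousOn_inv₀.mono (fun y hy => (hk0.trans_le hy.1).ne')
  have hint : Integrable (fun x : EuclideanSpace ℝ (Fin 2) => g ‖x‖) := by
    rw [integrable_fun_norm_addHaar volume, hyg]
    exact ((integrable_indicator_iff measurableSet_Icc).2 hint0).integrableOn
  have h1 : ∫ x : EuclideanSpace ℝ (Fin 2), ‖fderiv ℝ (cutEta k) x‖ ^ 2 ≤
      ∫ x : EuclideanSpace ℝ (Fin 2), g ‖x‖ :=
    integral_mono_of_nonneg (Eventually.of_forall fun x => by positivity) hint
      (Eventually.of_forall fun x => cutEta_fderiv_le hC0 hC hk x)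
  refine h1.trans ?_
  rw [integral_fun_norm_addHaar volume g, hyg, setIntegral_indicator measurableSet_Icc]
  have hsub : Set.Ioi (0:ℝ) ∩ Set.Icc (1 / (k:ℝ)) (1 / Real.sqrt k) =
      Set.Icc (1 / (k:ℝ)) (1 / Real.sqrt k) :=
    Set.inter_eq_right.2 fun y hy => hk0.trans_le hy.1
  rw [hsub, integral_Icc_eq_integral_Ioc, ← intervalIntegral.integral_of_le hle,
    intervalIntegral.integral_const_mul, integral_inv_of_pos hk0 hs0]
  have hlog : Real.log (1 / Real.sqrt k / (1 / (k:ℝ))) = Real.log k / 2 := by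
    rw [Real.log_div hs0.ne' hk0.ne', one_div, one_div, Real.log_inv, Real.log_inv,
      Real.log_sqrt (by positivity)]
    ring
  rw [hlog, hA]
  simp only [finrank_euclideanSpace, Fintype.card_fin, nsmul_eq_mul, smul_eq_mul]
  set V := volume.real (Metric.ball (0 : EuclideanSpace ℝ (Fin 2)) 1)
  have hV : 0 ≤ V := measureReal_nonneg
  have : ((2:ℕ):ℝ) * (V * ((2 * C / Real.log k) ^ 2 * (Real.log k / 2)))
    = (2 * V * (2 * C) ^ 2) * (Real.log k)⁻¹ / 2 := by
      push_cast; field_simp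
  have h2 : 0 ≤ (2 * V * (2 * C) ^ 2) * (Real.log k)⁻¹ := by positivity
  linarith

lemma cutEta_lp {k : ℕ} (hk : 2 ≤ k) {p : ℝ} (hp : 1 ≤ p) :
    ∫ x : EuclideanSpace ℝ (Fin 2), |cutEta k x| ^ p ≤
      (1 / Real.sqrt k) ^ 2 * volume.real (Metric.ball (0 : EuclideanSpace ℝ (Fin 2)) 1) := by
  have hs0 : 0 ≤ 1 / Real.sqrt (k:ℝ) := by positivity
  have e : (1 / Real.sqrt k) ^ 2 * volume.real (Metric.ball (0 : EuclideanSpace ℝ (Fin 2)) 1)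
      = ∫ x, (Metric.closedBall (0 : EuclideanSpace ℝ (Fin 2)) (1 / Real.sqrt k)).indicator
        (fun _ => (1:ℝ)) x := by
    rw [integral_indicator Metric.isClosed_closedBall.measurableSet]
    simp [measureReal_def, Measure.addHaar_closedBall volume _ (Real.sqrt_nonneg _),
      Measure.addHaar_closedBall volume _ (inv_nonneg.2 (Real.sqrt_nonneg _))]
  rw [e]
  apply integral_mono_of_nonneg (Eventually.of_forall fun x => by positivity)
  · rw [integrable_indicator_iff Metric.isClosed_closedBall.measurableSet]
    exact integrableOn_const (isCompact_closedBall _ _).measure_lt_top.ne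
  refine Eventually.of_forall fun x => ?_
  have hr := cutEta_range k x
  by_cases h : 1 / Real.sqrt k < ‖x‖
  · simp only [cutEta_zero hk x h, abs_zero]
    rw [Real.zero_rpow (by linarith)]
    exact Set.indicator_nonneg (fun _ _ => zero_le_one) _
  · simp only
    rw [Set.indicator_of_mem (by simpa using h)]
    exact Real.rpow_le_one (abs_nonneg _) (by rw [abs_of_nonneg hr.1]; exact hr.2) (by linarith)

/-- There exists a sequence of smooth radial cut-off functions `η_k : ℝ² → ℝ` (for `k ≥ 2`)
with `0 ≤ η_k ≤ 1`, `η_k ≡ 1` on the ball of radius `1/k`, vanishing outside the closed ball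
of radius `1/√k`, such that `η_k → 0` a.e., `‖η_k‖_{L^p} → 0` for every `1 ≤ p < ∞`, and
`∫ ‖∇η_k‖² → 0`. -/
theorem stmt_0 :
    ∃ η : ℕ → EuclideanSpace ℝ (Fin 2) → ℝ,
      (∀ k, 2 ≤ k →
        ContDiff ℝ (⊤ : ℕ∞) (η k) ∧
        (∀ x y : EuclideanSpace ℝ (Fin 2), ‖x‖ = ‖y‖ → η k x = η k y) ∧
        (∀ x, 0 ≤ η k x ∧ η k x ≤ 1) ∧
        (∀ x : EuclideanSpace ℝ (Fin 2), ‖x‖ < 1 / (k : ℝ) → η k x = 1) ∧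
        (∀ x : EuclideanSpace ℝ (Fin 2), 1 / Real.sqrt (k : ℝ) < ‖x‖ → η k x = 0)) ∧
      (∀ᵐ x : EuclideanSpace ℝ (Fin 2), Tendsto (fun k => η k x) atTop (nhds 0)) ∧
      (∀ p : ℝ, 1 ≤ p →
        Tendsto (fun k => ∫ x : EuclideanSpace ℝ (Fin 2), |η k x| ^ p) atTop (nhds 0)) ∧
      Tendsto (fun k => ∫ x : EuclideanSpace ℝ (Fin 2), ‖fderiv ℝ (η k) x‖ ^ 2) atTop
        (nhds 0) := by
  refine ⟨cutEta, fun k hk => ⟨cutEta_contDiff hk, ?_, cutEta_range k, cutEta_one hk,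
    cutEta_zero hk⟩, ?_, ?_, ?_⟩
  · intro x y h
    have : x = 0 ↔ y = 0 := by rw [← norm_eq_zero, h, norm_eq_zero]
    simp only [cutEta, h, this]
  · have h0 : ∀ᵐ x : EuclideanSpace ℝ (Fin 2), x ≠ 0 := by
      simp [ae_iff]
    filter_upwards [h0] with x hx
    apply tendsto_const_nhds.congr'
    filter_upwards [tendsto_inv_sqrt_nat.eventually_lt_const (norm_pos_iff.2 hx),
      eventually_ge_atTop 2] with k h1 h2
    exact (cutEta_zero h2 x h1).symm
  · intro p hp
    have hlim := (tendsto_inv_sqrt_nat.pow 2).mul_const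
      (volume.real (Metric.ball (0 : EuclideanSpace ℝ (Fin 2)) 1))
    rw [zero_pow two_ne_zero, zero_mul] at hlim
    refine tendsto_of_tendsto_of_tendsto_of_le_of_le' tendsto_const_nhds hlim
      (Eventually.of_forall fun k => integral_nonneg fun x => by positivity) ?_
    filter_upwards [eventually_ge_atTop 2] with k hk using cutEta_lp hk hp
  · obtain ⟨C, hC0, hC⟩ := smoothTransition_deriv_bound
    have hlim := ((tendsto_inv_atTop_zero.comp Real.tendsto_log_atTop).comp
      (tendsto_natCast_atTop_atTop (R := ℝ))).const_mul
      (2 * volume.real (Metric.ball (0 : EuclideanSpace ℝ (Fin 2)) 1) * (2 * C) ^ 2)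
    rw [mul_zero] at hlim
    refine tendsto_of_tendsto_of_tendsto_of_le_of_le' tendsto_const_nhds hlim
      (Eventually.of_forall fun k => integral_nonneg fun x => by positivity) ?_
    filter_upwards [eventually_ge_atTop 2] with k hk using cutEta_grad hC0 hC hk
end

section
/- Let m ≥ 1 and let f : ℝ² → ℝ^m be a C² function that is harmonic, i.e., ∂²f/∂x₁² + ∂²f/∂x₂² = 0 on ℝ², and has finite Dirichlet energy, ∫_{ℝ²} |∇f|² dx < ∞, where |∇f|² = Σ_{i=1}^{2} Σ_{j=1}^{m} (∂_i f_j)². Then f is constant. -/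
open MeasureTheory

/-- An entire function with finite `L¹` norm vanishes. -/
theorem entire_L1_zero (h : ℂ → ℂ) (hd : Differentiable ℂ h)
    (hint : (∫⁻ z, ‖h z‖ₑ) < ⊤) (c : ℂ) : h c = 0 := by
  by_contra hc
  have hmean : ∀ r : ℝ, ENNReal.ofReal (2 * Real.pi) * ‖h c‖ₑ ≤
      ∫⁻ θ in Set.Ioo (-Real.pi) Real.pi, ‖h (c + Complex.polarCoord.symm (r, θ))‖ₑ := by
    intro r
    have h1 : Real.circleAverage h c r = h c :=
      (hd.diffContOnCl (s := Metric.ball c |r|)).circleAverage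
    rw [Real.circleAverage_eq_integral_add (-Real.pi),
      intervalIntegral.integral_comp_add_right (fun θ ↦ h (circleMap c r θ))] at h1
    have h2 : (∫ θ in (-Real.pi)..Real.pi, h (circleMap c r θ)) = (2 * Real.pi) • h c := by
      rw [← h1, smul_smul, mul_inv_cancel₀ (by positivity), one_smul]
      congr 1 <;> ring
    rw [intervalIntegral.integral_of_le (by linarith [Real.pi_pos]),
      integral_Ioc_eq_integral_Ioo] at h2
    have h3 : ENNReal.ofReal (2 * Real.pi) * ‖h c‖ₑ = ‖(2 * Real.pi) • h c‖ₑ := by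
      rw [enorm_smul, Real.enorm_of_nonneg (by positivity)]
    rw [h3, ← h2]
    refine (enorm_integral_le_lintegral_enorm _).trans (le_of_eq ?_)
    congr 1
    ext θ
    rw [Complex.polarCoord_symm_apply, circleMap, Complex.exp_mul_I]
    simp
  have htrans : (∫⁻ z, ‖h (c + z)‖ₑ) = ∫⁻ z, ‖h z‖ₑ :=
    lintegral_add_left_eq_self (μ := volume) (fun z => ‖h z‖ₑ) c
  rw [← htrans, ← Complex.lintegral_comp_polarCoord_symm] at hint
  have hcont : Continuous (fun p : ℝ × ℝ => ‖h (c + Complex.polarCoord.symm p)‖ₑ) := by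
    simp only [Complex.polarCoord_symm_apply]
    have := hd.continuous
    fun_prop
  rw [polarCoord_target, Measure.volume_eq_prod, ← Measure.prod_restrict,
    lintegral_prod _ (by
      simp only [smul_eq_mul]
      exact (by fun_prop : Measurable fun p : ℝ × ℝ => ENNReal.ofReal p.1).mul
        hcont.measurable |>.aemeasurable)] at hint
  refine absurd hint (not_lt.2 ?_)
  have hK : ENNReal.ofReal (2 * Real.pi) * ‖h c‖ₑ ≠ 0 := by
    simp [hc, Real.pi_pos]
  calc (⊤ : ENNReal) = ∫⁻ r in Set.Ioi (1 : ℝ), ENNReal.ofReal (2 * Real.pi) * ‖h c‖ₑ := by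
        rw [setLIntegral_const, Real.volume_Ioi, ENNReal.mul_top hK]
    _ ≤ ∫⁻ r in Set.Ioi (1 : ℝ), ∫⁻ θ in Set.Ioo (-Real.pi) Real.pi,
          ENNReal.ofReal r • ‖h (c + Complex.polarCoord.symm (r, θ))‖ₑ := by
        refine setLIntegral_mono' measurableSet_Ioi fun r hr => ?_
        refine (hmean r).trans (lintegral_mono fun θ => ?_)
        have : (1 : ENNReal) ≤ ENNReal.ofReal r := by
          rw [ENNReal.one_le_ofReal]; exact le_of_lt hr
        simpa using mul_le_mul_left this ‖h (c + Complex.polarCoord.symm (r, θ))‖ₑ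
    _ ≤ _ := lintegral_mono_set (Set.Ioi_subset_Ioi zero_le_one)


/-- Liouville theorem: a `C²` harmonic map `f : ℝ² → ℝ^m` with finite Dirichlet energy
is constant. Here `∂_i f x = fderiv ℝ f x (e_i)` with `e_i` the standard basis of `ℝ²`. -/
theorem stmt_4 (m : ℕ) (hm : 1 ≤ m)
    (f : EuclideanSpace ℝ (Fin 2) → EuclideanSpace ℝ (Fin m))
    (hf : ContDiff ℝ 2 f)
    (hharm : ∀ x, (∑ i : Fin 2,
        fderiv ℝ (fun y => fderiv ℝ f y (EuclideanSpace.single i (1 : ℝ))) x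
          (EuclideanSpace.single i (1 : ℝ))) = 0)
    (henergy : (∫⁻ x : EuclideanSpace ℝ (Fin 2), ENNReal.ofReal
        (∑ i : Fin 2, ∑ j : Fin m,
          (fderiv ℝ f x (EuclideanSpace.single i (1 : ℝ)) j) ^ 2)) < ⊤) :
    ∀ x y, f x = f y := by
  classical
  let e := Complex.orthonormalBasisOneI.repr
  have he1 : e 1 = EuclideanSpace.single 0 (1 : ℝ) := by
    ext i; fin_cases i <;> simp [e, Complex.orthonormalBasisOneI_repr_apply]
  have heI : e Complex.I = EuclideanSpace.single 1 (1 : ℝ) := by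
    ext i; fin_cases i <;> simp [e, Complex.orthonormalBasisOneI_repr_apply]
  have hfd : Differentiable ℝ f := hf.differentiable (by norm_num)
  have hf' : Differentiable ℝ (fderiv ℝ f) :=
    (hf.fderiv_right (m := 1) (by norm_num)).differentiable (by norm_num)
  -- the partial derivatives all vanish
  have key : ∀ (j : Fin m) (z : ℂ), fderiv ℝ f (e z) (EuclideanSpace.single 0 (1 : ℝ)) j = 0 ∧
      fderiv ℝ f (e z) (EuclideanSpace.single 1 (1 : ℝ)) j = 0 := by
    intro j
    let l : EuclideanSpace ℝ (Fin m) →L[ℝ] ℝ := EuclideanSpace.proj j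
    let E : ℂ →L[ℝ] EuclideanSpace ℝ (Fin 2) := (e.toContinuousLinearEquiv : ℂ →L[ℝ] _)
    let u : ℂ → ℝ := fun z => l (f (E z))
    have hu : ContDiff ℝ 2 u := l.contDiff.comp (hf.comp E.contDiff)
    have hu' : Differentiable ℝ (fderiv ℝ u) :=
      (hu.fderiv_right (m := 1) (by norm_num)).differentiable (by norm_num)
    have hd1 : ∀ z w, fderiv ℝ u z w = l (fderiv ℝ f (E z) (E w)) := by
      intro z w
      have : HasFDerivAt u (l ∘L (fderiv ℝ f (E z) ∘L E)) z :=
        l.hasFDerivAt.comp z ((hfd (E z)).hasFDerivAt.comp z E.hasFDerivAt)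
      rw [this.fderiv]; rfl
    have hd2 : ∀ z w, fderiv ℝ (fderiv ℝ u) z w w =
        l (fderiv ℝ (fun y => fderiv ℝ f y (E w)) (E z) (E w)) := by
      intro z w
      have h1 : fderiv ℝ (fun y => fderiv ℝ u y w) z w = fderiv ℝ (fderiv ℝ u) z w w := by
        rw [fderiv_clm_apply (hu' z) (by fun_prop)]; simp
      have h2 : (fun y => fderiv ℝ u y w) = fun y => l (fderiv ℝ f (E y) (E w)) := by
        ext y; exact hd1 y w
      have h3 : DifferentiableAt ℝ (fun y => fderiv ℝ f y (E w)) (E z) :=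
        (hf' (E z)).clm_apply (by fun_prop)
      have : HasFDerivAt (fun y => l (fderiv ℝ f (E y) (E w)))
          (l ∘L (fderiv ℝ (fun y => fderiv ℝ f y (E w)) (E z) ∘L E)) z :=
        l.hasFDerivAt.comp z (h3.hasFDerivAt.comp z E.hasFDerivAt)
      rw [← h1, h2, this.fderiv]; rfl
    have hE1 : E 1 = EuclideanSpace.single 0 (1 : ℝ) := he1
    have hEI : E Complex.I = EuclideanSpace.single 1 (1 : ℝ) := heI
    have hlap : InnerProductSpace.HarmonicOnNhd u Set.univ := by
      intro z _
      refine ⟨hu.contDiffAt, Filter.Eventually.of_forall fun x => ?_⟩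
      rw [InnerProductSpace.laplacian_eq_iteratedFDeriv_complexPlane]
      have := congrArg l (hharm (E x))
      rw [Fin.sum_univ_two, map_add, map_zero] at this
      simp only [iteratedFDeriv_two_apply, Matrix.cons_val_zero, Matrix.cons_val_one]
      rw [hd2, hd2, hE1, hEI]
      exact this
    let g : ℂ → ℂ := fun z ↦ fderiv ℝ u z 1 - Complex.I * fderiv ℝ u z Complex.I
    have hg : Differentiable ℂ g := fun z =>
      HarmonicAt.differentiableAt_complex_partial (hlap z trivial)
    have hnorm : ∀ z, ‖g z ^ 2‖ = (fderiv ℝ u z 1) ^ 2 + (fderiv ℝ u z Complex.I) ^ 2 := by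
      intro z
      rw [norm_pow, ← Complex.normSq_eq_norm_sq, Complex.normSq_apply]
      simp [g]; ring
    have hfin : (∫⁻ z, ‖g z ^ 2‖ₑ) < ⊤ := by
      have hmp := Complex.orthonormalBasisOneI.measurePreserving_repr
      rw [← hmp.lintegral_comp_emb e.toHomeomorph.measurableEmbedding] at henergy
      refine lt_of_le_of_lt (lintegral_mono fun z => ?_) henergy
      rw [← ofReal_norm, hnorm]
      refine ENNReal.ofReal_le_ofReal ?_
      rw [Fin.sum_univ_two, hd1, hd1, hE1, hEI]
      exact add_le_add
        (Finset.single_le_sum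
          (f := fun j => (fderiv ℝ f (e z) (EuclideanSpace.single 0 (1 : ℝ)) j) ^ 2)
          (fun _ _ => sq_nonneg _) (Finset.mem_univ j))
        (Finset.single_le_sum
          (f := fun j => (fderiv ℝ f (e z) (EuclideanSpace.single 1 (1 : ℝ)) j) ^ 2)
          (fun _ _ => sq_nonneg _) (Finset.mem_univ j))
    intro z
    have h0 := entire_L1_zero (fun z => g z ^ 2) (hg.pow 2) hfin z
    have h1 := hnorm z
    rw [h0, norm_zero, hd1, hd1, hE1, hEI] at h1
    change 0 = (fderiv ℝ f (e z) (EuclideanSpace.single 0 (1 : ℝ)) j) ^ 2 +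
      (fderiv ℝ f (e z) (EuclideanSpace.single 1 (1 : ℝ)) j) ^ 2 at h1
    constructor <;> nlinarith [sq_nonneg (fderiv ℝ f (e z) (EuclideanSpace.single 0 (1 : ℝ)) j),
      sq_nonneg (fderiv ℝ f (e z) (EuclideanSpace.single 1 (1 : ℝ)) j)]
  refine is_const_of_fderiv_eq_zero hfd fun x => ?_
  obtain ⟨z, rfl⟩ := e.surjective x
  refine ContinuousLinearMap.coe_injective
    ((EuclideanSpace.basisFun (Fin 2) ℝ).toBasis.ext fun i => ?_)
  ext j
  fin_cases i
  · simpa using (key j z).1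
  · simpa using (key j z).2
end

section
/- Let w : ℝ² → ℝ² be a smooth map with ‖w(x)‖ = 1 for all x ∈ ℝ² which satisfies the harmonic map equation Δw + |∇w|² w = 0 on ℝ² (where Δ acts componentwise and |∇w|² = Σ_{i,j} (∂_i w_j)²), and suppose ∫_{ℝ²} |∇w|² dx < ∞. Then w is constant. -/
open MeasureTheory

noncomputable section

/-- Standard basis vectors of `ℝ²`. -/
def E2 (i : Fin 2) : EuclideanSpace ℝ (Fin 2) := EuclideanSpace.single i 1

/-- Componentwise Laplacian of a map `ℝ² → ℝ²`. -/
def lap2 (w : EuclideanSpace ℝ (Fin 2) → EuclideanSpace ℝ (Fin 2))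
    (x : EuclideanSpace ℝ (Fin 2)) : EuclideanSpace ℝ (Fin 2) :=
  ∑ i : Fin 2, fderiv ℝ (fun y => fderiv ℝ w y (E2 i)) x (E2 i)

/-- `|∇w|² = Σ_{i,j} (∂_i w_j)²` for a map `ℝ² → ℝ²`. -/
def gradSq2 (w : EuclideanSpace ℝ (Fin 2) → EuclideanSpace ℝ (Fin 2))
    (x : EuclideanSpace ℝ (Fin 2)) : ℝ :=
  ∑ i : Fin 2, ∑ j : Fin 2, (fderiv ℝ w x (E2 i) j) ^ 2

abbrev EE := EuclideanSpace ℝ (Fin 2)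

lemma circle_bound (F : ℂ → ℂ) (hF : Differentiable ℂ F) (c : ℂ) (r : ℝ) :
    ENNReal.ofReal (2 * Real.pi) * ‖F c‖ₑ ≤
      ∫⁻ θ in Set.Ioo (-Real.pi) Real.pi, ‖F (circleMap c r θ)‖ₑ := by
  have h1 : Real.circleAverage F c r = F c :=
    (hF.diffContOnCl).circleAverage
  have h2 : ∫ θ in (0 : ℝ)..(2 * Real.pi), F (circleMap c r θ)
      = ∫ θ in Set.Ioo (-Real.pi) Real.pi, F (circleMap c r θ) := by
    have hp : Function.Periodic (fun θ => F (circleMap c r θ)) (2 * Real.pi) := fun θ => by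
      simp only [periodic_circleMap c r θ]
    have := hp.intervalIntegral_add_eq 0 (-Real.pi)
    rw [zero_add] at this
    rw [this, show -Real.pi + 2 * Real.pi = Real.pi by ring,
      intervalIntegral.integral_of_le (by linarith [Real.pi_pos]), integral_Ioc_eq_integral_Ioo]
  have h3 : (2 * Real.pi) • F c = ∫ θ in Set.Ioo (-Real.pi) Real.pi, F (circleMap c r θ) := by
    rw [← h1, Real.circleAverage_def, h2, smul_smul, mul_inv_cancel₀ (by positivity), one_smul]
  calc ENNReal.ofReal (2 * Real.pi) * ‖F c‖ₑ = ‖(2 * Real.pi) • F c‖ₑ := by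
        rw [enorm_smul, Real.enorm_of_nonneg (by positivity)]
    _ ≤ _ := by rw [h3]; exact enorm_integral_le_lintegral_enorm _

lemma lintegral_entire_top (F : ℂ → ℂ) (hF : Differentiable ℂ F)
    (hfin : (∫⁻ z : ℂ, ‖F z‖ₑ) < ⊤) (c : ℂ) : F c = 0 := by
  by_contra hne
  have hshift : (∫⁻ z : ℂ, ‖F (c + z)‖ₑ) = ∫⁻ z : ℂ, ‖F z‖ₑ :=
    MeasureTheory.lintegral_add_left_eq_self (fun z => ‖F z‖ₑ) c
  have hFc : Continuous F := hF.continuous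
  have hpt : ∀ p : ℝ × ℝ, c + Complex.polarCoord.symm p = circleMap c p.1 p.2 := by
    intro p
    rw [Complex.polarCoord_symm_apply, circleMap, Complex.exp_mul_I]
    push_cast
    ring
  rw [← hshift, ← Complex.lintegral_comp_polarCoord_symm] at hfin
  simp only [hpt, smul_eq_mul, polarCoord_target] at hfin
  have hcm : Continuous fun p : ℝ × ℝ => F (circleMap c p.1 p.2) := by
    unfold circleMap
    fun_prop
  rw [Measure.volume_eq_prod, ← Measure.prod_restrict, lintegral_prod _ (by
    apply Measurable.aemeasurable
    exact (ENNReal.measurable_ofReal.comp measurable_fst).mul hcm.enorm.measurable)] at hfin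
  refine absurd hfin (not_lt.2 ?_)
  have hK : ENNReal.ofReal (2 * Real.pi) * ‖F c‖ₑ ≠ 0 := by
    refine mul_ne_zero ?_ (by simpa using hne)
    simp [Real.pi_pos]
  calc (⊤ : ENNReal) = ∫⁻ _ in Set.Ioi (1 : ℝ), ENNReal.ofReal (2 * Real.pi) * ‖F c‖ₑ := by
        rw [setLIntegral_const, Real.volume_Ioi, ENNReal.mul_top hK]
    _ ≤ ∫⁻ r in Set.Ioi (1 : ℝ), ∫⁻ θ in Set.Ioo (-Real.pi) Real.pi,
          ENNReal.ofReal r * ‖F (circleMap c r θ)‖ₑ := by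
        refine setLIntegral_mono' measurableSet_Ioi fun r hr => ?_
        refine (circle_bound F hF c r).trans (lintegral_mono fun θ => ?_)
        refine le_mul_of_one_le_left' ?_
        simpa using (Set.mem_Ioi.1 hr).le
    _ ≤ _ := lintegral_mono_set (Set.Ioi_subset_Ioi zero_le_one)

lemma comp_hasFDerivAt {f : EE → EE} {x : EE} (hf : DifferentiableAt ℝ f x) (i : Fin 2) :
    HasFDerivAt (fun y => f y i) ((EuclideanSpace.proj i : EE →L[ℝ] ℝ).comp (fderiv ℝ f x)) x :=
  (EuclideanSpace.proj i : EE →L[ℝ] ℝ).hasFDerivAt.comp x hf.hasFDerivAt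

lemma orth {w : EE → EE} (hw : Differentiable ℝ w) (hunit : ∀ x, ‖w x‖ = 1) (x v : EE) :
    w x 0 * fderiv ℝ w x v 0 + w x 1 * fderiv ℝ w x v 1 = 0 := by
  have h0 := comp_hasFDerivAt (hw x) 0
  have h1 := comp_hasFDerivAt (hw x) 1
  have h := (h0.mul h0).add (h1.mul h1)
  have hc : (fun y => w y 0) * (fun y => w y 0) + (fun y => w y 1) * (fun y => w y 1)
      = fun _ => (1 : ℝ) := by
    funext y
    have := EuclideanSpace.real_norm_sq_eq (w y)
    rw [hunit, Fin.sum_univ_two] at this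
    simp; nlinarith
  have h2 := h.unique (hc ▸ hasFDerivAt_const (1 : ℝ) x)
  have h3 := DFunLike.congr_fun h2 v
  simp at h3
  linarith

def aa (w : EE → EE) (i : Fin 2) (x : EE) : ℝ :=
  w x 0 * fderiv ℝ w x (E2 i) 1 - w x 1 * fderiv ℝ w x (E2 i) 0

lemma aa_hasFDerivAt {w : EE → EE} (hw : Differentiable ℝ w) (i : Fin 2) (x : EE)
    (hd : DifferentiableAt ℝ (fun y => fderiv ℝ w y (E2 i)) x) :
    ∃ A : EE →L[ℝ] ℝ, HasFDerivAt (aa w i) A x ∧ ∀ v, A v =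
      w x 0 * fderiv ℝ (fun y => fderiv ℝ w y (E2 i)) x v 1
        + fderiv ℝ w x v 0 * fderiv ℝ w x (E2 i) 1
      - (w x 1 * fderiv ℝ (fun y => fderiv ℝ w y (E2 i)) x v 0
        + fderiv ℝ w x v 1 * fderiv ℝ w x (E2 i) 0) := by
  have h := ((comp_hasFDerivAt (hw x) 0).mul (comp_hasFDerivAt hd 1)).sub
    ((comp_hasFDerivAt (hw x) 1).mul (comp_hasFDerivAt hd 0))
  refine ⟨_, h, fun v => ?_⟩
  simp
  ring

def LL : ℂ ≃ₗᵢ[ℝ] EE := Complex.orthonormalBasisOneI.repr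

lemma LL_one : LL 1 = E2 0 := by
  ext i; fin_cases i <;> simp [LL, E2]
lemma LL_I : LL Complex.I = E2 1 := by
  ext i; fin_cases i <;> simp [LL, E2]

def gg (w : EE → EE) (z : ℂ) : ℂ := (aa w 0 (LL z) : ℂ) - (aa w 1 (LL z) : ℂ) * Complex.I

/-- There is no nonconstant finite-energy smooth harmonic map from `ℝ²` to the unit
circle `S¹ ⊂ ℝ²`: if `‖w‖ ≡ 1`, `Δw + |∇w|² w = 0`, and `∫ |∇w|² < ∞`, then `w` is
constant. -/
theorem stmt_5 (w : EuclideanSpace ℝ (Fin 2) → EuclideanSpace ℝ (Fin 2))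
    (hw : ContDiff ℝ (⊤ : ℕ∞) w)
    (hunit : ∀ x, ‖w x‖ = 1)
    (heq : ∀ x, lap2 w x + gradSq2 w x • w x = 0)
    (henergy : (∫⁻ x : EuclideanSpace ℝ (Fin 2), ENNReal.ofReal (gradSq2 w x)) < ⊤) :
    ∀ x y, w x = w y := by
  have hwd : Differentiable ℝ w := hw.differentiable (by simp)
  have hfd : Differentiable ℝ (fderiv ℝ w) :=
    (hw.fderiv_right (m := 1) (WithTop.coe_le_coe.2 (le_top : (1 + 1 : ℕ∞) ≤ ⊤))).differentiable (by simp)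
  have hD : ∀ i x, DifferentiableAt ℝ (fun y => fderiv ℝ w y (E2 i)) x := fun i x =>
    (hfd x).clm_apply (differentiableAt_const _)
  have hDval : ∀ i x v, fderiv ℝ (fun y => fderiv ℝ w y (E2 i)) x v
      = fderiv ℝ (fderiv ℝ w) x v (E2 i) := by
    intro i x v
    rw [fderiv_clm_apply (hfd x) (differentiableAt_const _)]
    simp
  have hsymm : ∀ x, fderiv ℝ (fderiv ℝ w) x (E2 0) (E2 1)
      = fderiv ℝ (fderiv ℝ w) x (E2 1) (E2 0) := by
    intro x
    exact (hw.contDiffAt.isSymmSndFDerivAt (by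
      rw [minSmoothness_of_isRCLikeNormedField]
      exact WithTop.coe_le_coe.2 (le_top : (2 : ℕ∞) ≤ ⊤))) _ _
  have hu2 : ∀ y, w y 0 ^ 2 + w y 1 ^ 2 = 1 := by
    intro y
    have := EuclideanSpace.real_norm_sq_eq (w y)
    rw [hunit, Fin.sum_univ_two] at this
    linarith
  have hsq : ∀ i x, aa w i x ^ 2 = (fderiv ℝ w x (E2 i) 0) ^ 2 + (fderiv ℝ w x (E2 i) 1) ^ 2 := by
    intro i x
    have h1 := orth hwd hunit x (E2 i)
    have h2 := hu2 x
    unfold aa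
    linear_combination (- (w x 0 * fderiv ℝ w x (E2 i) 0 + w x 1 * fderiv ℝ w x (E2 i) 1)) * h1 +
      ((fderiv ℝ w x (E2 i) 0) ^ 2 + (fderiv ℝ w x (E2 i) 1) ^ 2) * h2
  have hgrad : ∀ x, gradSq2 w x = aa w 0 x ^ 2 + aa w 1 x ^ 2 := by
    intro x
    simp only [gradSq2, Fin.sum_univ_two, hsq]
  have hg : Differentiable ℂ (gg w) := by
    intro z
    obtain ⟨A, hA, hAv⟩ := aa_hasFDerivAt hwd 0 (LL z) (hD 0 _)
    obtain ⟨B, hB, hBv⟩ := aa_hasFDerivAt hwd 1 (LL z) (hD 1 _)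
    have hL : HasFDerivAt (fun z => LL z) (LL.toContinuousLinearEquiv : ℂ →L[ℝ] EE) z :=
      LL.toContinuousLinearEquiv.hasFDerivAt
    have hA' := Complex.ofRealCLM.hasFDerivAt.comp z (hA.comp z hL)
    have hB' := Complex.ofRealCLM.hasFDerivAt.comp z (hB.comp z hL)
    have hG := hA'.sub (hB'.mul_const Complex.I)
    have hG' : HasFDerivAt (gg w) _ z := hG
    rw [differentiableAt_complex_iff_differentiableAt_real]
    refine ⟨hG'.differentiableAt, ?_⟩
    rw [hG'.fderiv]
    have hcurl : A (E2 1) = B (E2 0) := by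
      rw [hAv, hBv, hDval, hDval, hsymm]
      have o0 := orth hwd hunit (LL z) (E2 0)
      have o1 := orth hwd hunit (LL z) (E2 1)
      have u2 := hu2 (LL z)
      generalize fderiv ℝ w (LL z) (E2 0) 0 = a at *
      generalize fderiv ℝ w (LL z) (E2 0) 1 = b at *
      generalize fderiv ℝ w (LL z) (E2 1) 0 = c at *
      generalize fderiv ℝ w (LL z) (E2 1) 1 = d at *
      generalize w (LL z) 0 = u at *
      generalize w (LL z) 1 = v at *
      have key : c * b - a * d = 0 := by
        linear_combination (-(c * b - a * d)) * u2 + (u*c*0) * o0 + (c * v - d * u) * o0 + (b * u - a * v) * o1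
      linear_combination 2 * key
    have hdiv : A (E2 0) = - B (E2 1) := by
      rw [hAv, hBv]
      have e := heq (LL z)
      have e0 := congrArg (fun t : EE => t 0) e
      have e1 := congrArg (fun t : EE => t 1) e
      simp [lap2] at e0 e1
      linear_combination (w (LL z) 0) * e1 - (w (LL z) 1) * e0
    simp [LL_one, LL_I, hcurl, hdiv]
    apply Complex.ext <;> simp
  have hz : ∀ z, gg w z = 0 := by
    intro z
    have := lintegral_entire_top (fun z => gg w z ^ 2) (hg.pow 2) ?_ z
    · simpa using this
    · have hmp : MeasurePreserving LL volume volume := LL.measurePreserving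
      rw [← hmp.lintegral_comp_emb LL.toHomeomorph.measurableEmbedding] at henergy
      refine lt_of_le_of_lt (le_of_eq ?_) henergy
      congr 1
      funext z
      rw [← ofReal_norm, hgrad, norm_pow, ← Complex.normSq_eq_norm_sq]
      simp [gg, Complex.normSq_apply]
      ring_nf
  have hderiv : ∀ x, fderiv ℝ w x = 0 := by
    intro x
    have h := hz (LL.symm x)
    have h0 := congrArg Complex.re h
    have h1 := congrArg Complex.im h
    simp [gg] at h0 h1
    have s0 := hsq 0 x
    have s1 := hsq 1 x
    rw [h0] at s0
    rw [h1] at s1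
    have hv : ∀ i, fderiv ℝ w x (E2 i) = 0 := by
      intro i
      ext j
      fin_cases i <;> fin_cases j <;> simp <;> nlinarith [sq_nonneg (fderiv ℝ w x (E2 0) 0), sq_nonneg (fderiv ℝ w x (E2 0) 1), sq_nonneg (fderiv ℝ w x (E2 1) 0), sq_nonneg (fderiv ℝ w x (E2 1) 1)]
    apply ContinuousLinearMap.coe_injective
    apply (EuclideanSpace.basisFun (Fin 2) ℝ).toBasis.ext
    intro i
    simpa [E2] using hv i
  exact is_const_of_fderiv_eq_zero hwd hderiv

end
end

section
/- Let γ > 0, m ≥ 1, and let w : ℝ² → ℝ^m be a smooth map satisfying −Δw = γ²(1 − ‖w‖²)w on ℝ² (componentwise Laplacian), with finite energy ∫_{ℝ²} [½|∇w|² + γ²(1 − ‖w‖²)²] dx < ∞, where |∇w|² = Σ_{i,j} (∂_i w_j)². Then w is constant. -/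
open MeasureTheory

noncomputable section

/-- Componentwise Laplacian of a map `ℝ² → ℝ^m`. -/
def lap2m (m : ℕ) (w : EuclideanSpace ℝ (Fin 2) → EuclideanSpace ℝ (Fin m))
    (x : EuclideanSpace ℝ (Fin 2)) : EuclideanSpace ℝ (Fin m) :=
  ∑ i : Fin 2, fderiv ℝ (fun y => fderiv ℝ w y (E2 i)) x (E2 i)

/-- `|∇w|² = Σ_{i,j} (∂_i w_j)²` for a map `ℝ² → ℝ^m`. -/
def gradSq2m (m : ℕ) (w : EuclideanSpace ℝ (Fin 2) → EuclideanSpace ℝ (Fin m))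
    (x : EuclideanSpace ℝ (Fin 2)) : ℝ :=
  ∑ i : Fin 2, ∑ j : Fin m, (fderiv ℝ w x (E2 i) j) ^ 2

abbrev PlaneGL := EuclideanSpace ℝ (Fin 2)

/-- Integration by parts against a compactly supported function, for divergence free fields. -/
lemma gl_div_free_test (t : Fin 2 → PlaneGL → ℝ) (ht : ∀ i, ContDiff ℝ 1 (t i))
    (hdiv : ∀ x, ∑ i : Fin 2, fderiv ℝ (t i) x (E2 i) = 0)
    (g : PlaneGL → ℝ) (hg : ContDiff ℝ 1 g) (hgc : HasCompactSupport g) :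
    ∫ x, ∑ i : Fin 2, t i x * fderiv ℝ g x (E2 i) = 0 := by
  have c1 : ∀ i, Continuous (t i) := fun i => (ht i).continuous
  have c2 : ∀ i, Continuous (fun x => fderiv ℝ (t i) x (E2 i)) := fun i =>
    ((ht i).continuous_fderiv (by norm_num)).clm_apply continuous_const
  have c3 : ∀ i, Continuous (fun x => fderiv ℝ g x (E2 i)) := fun i =>
    (hg.continuous_fderiv (by norm_num)).clm_apply continuous_const
  have s3 : ∀ i, HasCompactSupport (fun x => fderiv ℝ g x (E2 i)) := fun i =>
    hgc.fderiv_apply (𝕜 := ℝ) (E2 i)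
  have i1 : ∀ i, Integrable (fun x => t i x * fderiv ℝ g x (E2 i)) := fun i =>
    ((c1 i).mul (c3 i)).integrable_of_hasCompactSupport ((s3 i).mul_left)
  have i2 : ∀ i, Integrable (fun x => fderiv ℝ (t i) x (E2 i) * g x) := fun i =>
    ((c2 i).mul hg.continuous).integrable_of_hasCompactSupport (hgc.mul_left)
  have i3 : ∀ i, Integrable (fun x => t i x * g x) := fun i =>
    ((c1 i).mul hg.continuous).integrable_of_hasCompactSupport (hgc.mul_left)
  rw [integral_finsetSum _ (fun i _ => i1 i)]
  have h : ∀ i, ∫ x, t i x * fderiv ℝ g x (E2 i) = - ∫ x, fderiv ℝ (t i) x (E2 i) * g x :=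
    fun i => integral_mul_fderiv_eq_neg_fderiv_mul_of_integrable (i2 i) (i1 i) (i3 i)
      (fun x _ => (ht i).differentiable (by norm_num) x)
      (fun x _ => hg.differentiable (by norm_num) x)
  simp_rw [h]
  rw [Finset.sum_neg_distrib, ← integral_finsetSum _ (fun i _ => i2 i)]
  simp_rw [← Finset.sum_mul, hdiv]
  simp

/-- An integrable divergence free field has zero mean. -/
lemma gl_div_free_mean (t : Fin 2 → PlaneGL → ℝ) (ht : ∀ i, ContDiff ℝ 1 (t i))
    (hint : ∀ i, Integrable (t i))
    (hdiv : ∀ x, ∑ i : Fin 2, fderiv ℝ (t i) x (E2 i) = 0) (j : Fin 2) :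
    ∫ x, t j x = 0 := by
  let b : ContDiffBump (0 : PlaneGL) := ⟨1, 2, by norm_num, by norm_num⟩
  let p : PlaneGL → ℝ := fun x => b x * x j
  have hp : ContDiff ℝ 1 p := by
    apply ContDiff.mul b.contDiff
    exact (EuclideanSpace.proj (𝕜 := ℝ) j).contDiff
  have hpc : HasCompactSupport p := b.hasCompactSupport.mul_right
  have hp0 : ∀ v, fderiv ℝ p 0 v = v j := by
    intro v
    have e : p =ᶠ[nhds 0] (EuclideanSpace.proj (𝕜 := ℝ) j : PlaneGL →L[ℝ] ℝ) := by
      filter_upwards [b.eventuallyEq_one] with x hx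
      simp [p, hx]
    rw [e.fderiv_eq, ContinuousLinearMap.fderiv]
    simp
  obtain ⟨C, hC⟩ := (hpc.fderiv (𝕜 := ℝ)).exists_bound_of_continuous
    (hp.continuous_fderiv (by norm_num))
  have hcf : ∀ i, Continuous (fun x => fderiv ℝ p x (E2 i)) := fun i =>
    (hp.continuous_fderiv (by norm_num)).clm_apply continuous_const
  have key : ∀ n : ℕ, ∫ x, ∑ i : Fin 2, t i x *
      fderiv ℝ p ((1 / ((n : ℝ) + 1)) • x) (E2 i) = 0 := by
    intro n
    set c : ℝ := 1 / ((n : ℝ) + 1) with hc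
    have hc0 : c ≠ 0 := by positivity
    have h := gl_div_free_test t ht hdiv (fun x => p (c • x))
      (hp.comp (contDiff_const_smul c)) (hpc.comp_smul hc0)
    have hd : ∀ x i, fderiv ℝ (fun x => p (c • x)) x (E2 i) = c * fderiv ℝ p (c • x) (E2 i) := by
      intro x i
      have h1 : HasFDerivAt (fun x : PlaneGL => p (c • x))
          ((fderiv ℝ p (c • x)).comp (c • ContinuousLinearMap.id ℝ PlaneGL)) x :=
        ((hp.differentiable (by norm_num) (c • x)).hasFDerivAt).comp x
          ((hasFDerivAt_id x).const_smul c)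
      rw [h1.fderiv]; simp
    simp_rw [hd, mul_left_comm _ c, ← Finset.mul_sum] at h
    rw [integral_const_mul] at h
    exact (mul_eq_zero.mp h).resolve_left hc0
  have lim : Filter.Tendsto (fun n : ℕ => ∫ x, ∑ i : Fin 2, t i x *
      fderiv ℝ p ((1 / ((n : ℝ) + 1)) • x) (E2 i)) Filter.atTop
      (nhds (∫ x, ∑ i : Fin 2, t i x * (E2 i) j)) := by
    apply tendsto_integral_of_dominated_convergence
      (fun x => ∑ i : Fin 2, ‖t i x‖ * (C * ‖E2 i‖))
    · intro n
      apply Continuous.aestronglyMeasurable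
      exact continuous_finsetSum _ fun i _ => (ht i).continuous.mul
        ((hcf i).comp (continuous_const_smul _))
    · exact integrable_finsetSum _ fun i _ => (hint i).norm.mul_const _
    · intro n
      filter_upwards with x
      refine (norm_sum_le _ _).trans (Finset.sum_le_sum fun i _ => ?_)
      rw [norm_mul]
      gcongr
      exact (ContinuousLinearMap.le_opNorm _ _).trans (by gcongr; exact hC _)
    · filter_upwards with x
      refine tendsto_finsetSum _ fun i _ => Filter.Tendsto.const_mul _ ?_
      rw [← hp0 (E2 i)]
      refine ((hcf i).tendsto 0).comp ?_
      have := (tendsto_one_div_add_atTop_nhds_zero_nat (𝕜 := ℝ)).smul_const x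
      simpa using this
  simp_rw [key] at lim
  have := tendsto_nhds_unique lim tendsto_const_nhds
  simpa [E2, PiLp.single_apply] using this

/-- The stress-energy tensor is divergence free. -/
lemma gl_stress_div (γ : ℝ) (m : ℕ) (w : PlaneGL → EuclideanSpace ℝ (Fin m))
    (a : Fin 2 → PlaneGL → EuclideanSpace ℝ (Fin m))
    (ha : ∀ i x, a i x = fderiv ℝ w x (E2 i))
    (hw : Differentiable ℝ w) (had : ∀ i, Differentiable ℝ (a i))
    (hsym : ∀ i j x, fderiv ℝ (a i) x (E2 j) = fderiv ℝ (a j) x (E2 i))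
    (heq : ∀ x, -(∑ i, fderiv ℝ (a i) x (E2 i)) = (γ ^ 2 * (1 - ‖w x‖ ^ 2)) • w x)
    (j : Fin 2) (x : PlaneGL) :
    ∑ i : Fin 2, fderiv ℝ (fun x => inner ℝ (a i x) (a j x) - (if i = j then (1:ℝ) else 0) *
      ((1 / 2) * ∑ k : Fin 2, inner ℝ (a k x) (a k x)
        + γ ^ 2 / 4 * (1 - inner ℝ (w x) (w x)) ^ 2)) x (E2 i) = 0 := by
  have hI : ∀ i j, HasFDerivAt (fun x => inner ℝ (a i x) (a j x)) _ x := fun i j =>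
    ((had i x).hasFDerivAt).inner ℝ ((had j x).hasFDerivAt)
  have hW := ((hw x).hasFDerivAt).inner ℝ ((hw x).hasFDerivAt)
  have hE := ((HasFDerivAt.fun_sum (u := Finset.univ) (fun k _ => hI k k)).const_mul (1 / 2)).add
    (((hW.const_sub 1).pow 2).const_mul (γ ^ 2 / 4))
  have hT : ∀ i, HasFDerivAt (fun x => inner ℝ (a i x) (a j x) - (if i = j then (1:ℝ) else 0) *
      ((1 / 2) * ∑ k : Fin 2, inner ℝ (a k x) (a k x)
        + γ ^ 2 / 4 * (1 - inner ℝ (w x) (w x)) ^ 2)) _ x := fun i =>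
    (hI i j).sub (hE.const_mul _)
  simp_rw [fun i => (hT i).fderiv]
  have h2 := congrArg (fun v => inner ℝ v (a j x)) (heq x)
  simp only [Fin.sum_univ_two, inner_neg_left, inner_add_left, inner_smul_left,
    ← real_inner_self_eq_norm_sq] at h2
  have s := hsym 0 1 x
  fin_cases j <;>
  · simp [Fin.sum_univ_two, fderivInnerCLM_apply, ← ha] at h2 ⊢
    rw [s]
    have c1 := fun i k l => real_inner_comm (a i x) (fderiv ℝ (a k) x (E2 l))
    have c2 := fun i => real_inner_comm (a i x) (w x)
    simp only [c1, c2] at h2 ⊢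
    linarith

/-- Liouville theorem for the Ginzburg–Landau equation on the plane: a smooth entire
solution of `−Δw = γ²(1 − ‖w‖²)w` with finite energy
`∫ [½|∇w|² + γ²(1 − ‖w‖²)²] < ∞` is constant. -/
theorem stmt_6 (γ : ℝ) (hγ : 0 < γ) (m : ℕ) (hm : 1 ≤ m)
    (w : EuclideanSpace ℝ (Fin 2) → EuclideanSpace ℝ (Fin m))
    (hw : ContDiff ℝ (⊤ : ℕ∞) w)
    (heq : ∀ x, -lap2m m w x = (γ ^ 2 * (1 - ‖w x‖ ^ 2)) • w x)
    (henergy : (∫⁻ x : EuclideanSpace ℝ (Fin 2), ENNReal.ofReal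
        ((1 / 2) * gradSq2m m w x + γ ^ 2 * (1 - ‖w x‖ ^ 2) ^ 2)) < ⊤) :
    ∀ x y, w x = w y := by
  have hw2 : ContDiff ℝ 2 w := contDiff_infty.mp hw 2
  set a : Fin 2 → PlaneGL → EuclideanSpace ℝ (Fin m) := fun i x => fderiv ℝ w x (E2 i) with ha
  have hac : ∀ i, ContDiff ℝ 1 (a i) := fun i =>
    (hw2.fderiv_right (m := 1) (by norm_num)).clm_apply contDiff_const
  have hwd : Differentiable ℝ w := hw2.differentiable (by norm_num)
  have had : ∀ i, Differentiable ℝ (a i) := fun i => (hac i).differentiable (by norm_num)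
  have hfd : ∀ i x v, fderiv ℝ (a i) x v = fderiv ℝ (fderiv ℝ w) x v (E2 i) := by
    intro i x v
    have h1 := ((hw2.fderiv_right (m := 1) (by norm_num)).differentiable (by norm_num) x).hasFDerivAt
    have h2 := h1.clm_apply (hasFDerivAt_const (E2 i) x)
    rw [h2.fderiv]; simp
  have hsym : ∀ i j x, fderiv ℝ (a i) x (E2 j) = fderiv ℝ (a j) x (E2 i) := by
    intro i j x
    rw [hfd, hfd]
    exact (hw2.contDiffAt.isSymmSndFDerivAt (by simp)) _ _
  have heq' : ∀ x, -(∑ i, fderiv ℝ (a i) x (E2 i)) = (γ ^ 2 * (1 - ‖w x‖ ^ 2)) • w x := heq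
  have hgrad : ∀ x, gradSq2m m w x = ∑ i, inner ℝ (a i x) (a i x) := by
    intro x
    simp only [gradSq2m, ha, real_inner_self_eq_norm_sq, EuclideanSpace.norm_sq_eq,
      Real.norm_eq_abs, sq_abs]
  have cw : Continuous w := hwd.continuous
  have ca : ∀ i, Continuous (a i) := fun i => (hac i).continuous
  -- integrability of the energy density
  have hF : Integrable (fun x => (1 / 2) * ∑ i, inner ℝ (a i x) (a i x)
      + γ ^ 2 * (1 - ‖w x‖ ^ 2) ^ 2) := by
    have hcont : Continuous (fun x => (1 / 2) * ∑ i, inner ℝ (a i x) (a i x)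
      + γ ^ 2 * (1 - ‖w x‖ ^ 2) ^ 2) := by fun_prop
    refine ⟨hcont.aestronglyMeasurable, ?_⟩
    rw [hasFiniteIntegral_iff_ofReal]
    · simpa only [hgrad] using henergy
    · filter_upwards with x
      have : ∀ i, 0 ≤ inner ℝ (a i x) (a i x) := fun i => real_inner_self_nonneg
      have := Finset.sum_nonneg (s := Finset.univ) fun i _ => this i
      simp only [Pi.zero_apply]
      positivity
  let t : Fin 2 → Fin 2 → PlaneGL → ℝ := fun j i x =>
    inner ℝ (a i x) (a j x) - (if i = j then (1:ℝ) else 0) *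
      ((1 / 2) * ∑ k : Fin 2, inner ℝ (a k x) (a k x)
        + γ ^ 2 / 4 * (1 - inner ℝ (w x) (w x)) ^ 2)
  have htc : ∀ j i, ContDiff ℝ 1 (t j i) := by
    intro j i
    have hw1 : ContDiff ℝ 1 w := hw2.of_le (by norm_num)
    refine ((hac i).inner ℝ (hac j)).sub (contDiff_const.mul ((contDiff_const.mul
      (ContDiff.sum fun k _ => (hac k).inner ℝ (hac k))).add (contDiff_const.mul
      ((contDiff_const.sub (hw1.inner ℝ hw1)).pow 2))))
  have hti : ∀ j i, Integrable (t j i) := by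
    intro j i
    refine (hF.const_mul 2).mono' (htc j i).continuous.aestronglyMeasurable ?_
    filter_upwards with x
    have h1 := abs_real_inner_le_norm (a 0 x) (a 1 x)
    have h2 := sq_nonneg (‖a 0 x‖ - ‖a 1 x‖)
    have h3 : 0 ≤ γ ^ 2 * (1 - ‖w x‖ ^ 2) ^ 2 := by positivity
    have h4 := abs_le.mp h1
    have h5 := sq_nonneg ‖a 0 x‖
    have h6 := sq_nonneg ‖a 1 x‖
    simp only [t, Fin.sum_univ_two, Real.norm_eq_abs, real_inner_self_eq_norm_sq]
    rw [abs_le]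
    fin_cases i <;> fin_cases j <;>
      simp [real_inner_self_eq_norm_sq, real_inner_comm] at h4 ⊢ <;> constructor <;> nlinarith
  have hdiv := gl_stress_div γ m w a (fun i x => rfl) hwd had hsym heq'
  have hmean : ∀ j, ∫ x, t j j x = 0 := fun j =>
    gl_div_free_mean (t j) (htc j) (hti j) (fun x => hdiv j x) j
  have hpot : ∫ x, γ ^ 2 / 2 * (1 - ‖w x‖ ^ 2) ^ 2 = 0 := by
    have h : ∀ x, γ ^ 2 / 2 * (1 - ‖w x‖ ^ 2) ^ 2 = - (t 0 0 x + t 1 1 x) := by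
      intro x
      simp only [t, Fin.sum_univ_two, real_inner_self_eq_norm_sq]
      simp
      ring
    simp_rw [h]
    rw [integral_neg, integral_add (hti 0 0) (hti 1 1), hmean, hmean]
    simp
  have hcp : Continuous (fun x => γ ^ 2 / 2 * (1 - ‖w x‖ ^ 2) ^ 2) := by fun_prop
  have hone : ∀ x, ‖w x‖ ^ 2 = 1 := by
    rw [integral_eq_zero_iff_of_nonneg (fun x => by positivity)] at hpot
    · have := (hcp.ae_eq_iff_eq volume continuous_const).mp hpot
      intro x
      have h := congrFun this x
      have hg : γ ^ 2 / 2 ≠ 0 := by positivity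
      have h := (mul_eq_zero.mp h).resolve_left hg
      have := pow_eq_zero_iff (two_ne_zero) |>.mp h
      linarith
    · refine hF.mono' hcp.aestronglyMeasurable ?_
      filter_upwards with x
      have h3 : 0 ≤ γ ^ 2 * (1 - ‖w x‖ ^ 2) ^ 2 := by positivity
      have h5 := sq_nonneg ‖a 0 x‖
      have h6 := sq_nonneg ‖a 1 x‖
      rw [Real.norm_of_nonneg (by positivity)]
      simp only [Fin.sum_univ_two, real_inner_self_eq_norm_sq]
      nlinarith
  have hort : ∀ i x, inner ℝ (w x) (a i x) = 0 := by
    intro i x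
    have h := fderiv_inner_apply ℝ (hwd x) (hwd x) (E2 i)
    simp only [real_inner_self_eq_norm_sq, hone] at h
    rw [real_inner_comm (w x)] at h
    simp at h
    simp only [ha]; linarith
  have hsecond : ∀ i x, inner ℝ (w x) (fderiv ℝ (a i) x (E2 i)) + ‖a i x‖ ^ 2 = 0 := by
    intro i x
    have h := fderiv_inner_apply ℝ (hwd x) (had i x) (E2 i)
    simp only [hort] at h
    rw [← real_inner_self_eq_norm_sq]
    simp only [fderiv_fun_const, Pi.zero_apply, ContinuousLinearMap.zero_apply] at h
    exact h.symm
  have hzero : ∀ i x, a i x = 0 := by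
    intro i x
    have h0 := heq' x
    rw [hone, Fin.sum_univ_two] at h0
    have h1 := congrArg (inner ℝ (w x)) h0
    simp only [inner_neg_right, inner_add_right, sub_self, mul_zero, zero_smul,
      inner_zero_right] at h1
    have h2 := hsecond 0 x
    have h3 := hsecond 1 x
    have h5 := sq_nonneg ‖a 0 x‖
    have h6 := sq_nonneg ‖a 1 x‖
    have h7 : ‖a i x‖ ^ 2 = 0 := by fin_cases i <;> simp only [Fin.zero_eta, Fin.mk_one] <;> linarith
    simpa using h7
  refine is_const_of_fderiv_eq_zero hwd (fun x => ?_)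
  ext1 v
  have hv : v = v 0 • E2 0 + v 1 • E2 1 := by
    ext k; fin_cases k <;> simp [E2]
  rw [hv, map_add, map_smul, map_smul]
  change v 0 • a 0 x + v 1 • a 1 x = _
  simp [hzero]

end
end

section
/- Let Λ ≥ 0, R > 0, p₀ ∈ ℝ³, and let d : B_R(p₀) → ℝ³ be a smooth map with ‖d(x)‖ = 1 for all x in the closed ball B_R(p₀). Set τ = Δd + |∇d|² d (componentwise Laplacian, |∇d|² = Σ_{i,j} (∂_i d_j)²) and assume ∫_{B_R(p₀)} ‖τ‖² dx ≤ Λ. Then for every 0 < r ≤ R: (1/r) ∫_{B_r(p₀)} |∇d|² dx ≤ (2/R) ∫_{B_R(p₀)} |∇d|² dx + 4ΛR. -/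
open MeasureTheory

noncomputable section

/-- Standard basis vectors of `ℝ³`. -/
def E3 (i : Fin 3) : EuclideanSpace ℝ (Fin 3) := EuclideanSpace.single i 1

/-- Componentwise Laplacian of a map `ℝ³ → ℝ³`. -/
def lap3 (d : EuclideanSpace ℝ (Fin 3) → EuclideanSpace ℝ (Fin 3))
    (x : EuclideanSpace ℝ (Fin 3)) : EuclideanSpace ℝ (Fin 3) :=
  ∑ i : Fin 3, fderiv ℝ (fun y => fderiv ℝ d y (E3 i)) x (E3 i)

/-- `|∇d|² = Σ_{i,j} (∂_i d_j)²` for a map `ℝ³ → ℝ³`. -/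
def gradSq3 (d : EuclideanSpace ℝ (Fin 3) → EuclideanSpace ℝ (Fin 3))
    (x : EuclideanSpace ℝ (Fin 3)) : ℝ :=
  ∑ i : Fin 3, ∑ j : Fin 3, (fderiv ℝ d x (E3 i) j) ^ 2

open Filter Topology Metric
open scoped NNReal RealInnerProductSpace

/-- Shorthand for Euclidean three-space. -/
abbrev V3 : Type := EuclideanSpace ℝ (Fin 3)

/-- The radial cutoff `1 / max (min |x-p| R) r - 1 / R`. -/
def psi (p : V3) (r R : ℝ) (x : V3) : ℝ := 1 / max (min ‖x - p‖ R) r - 1 / R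

theorem psi_lip (p : V3) {r R : ℝ} (hr : 0 < r) :
    ∃ C : ℝ≥0, LipschitzWith C (psi p r R) := by
  refine ⟨Real.toNNReal (1 / (r * r)), LipschitzWith.of_dist_le_mul fun x y => ?_⟩
  rw [Real.coe_toNNReal _ (by positivity), Real.dist_eq, dist_eq_norm]
  unfold psi
  set a := max (min ‖x - p‖ R) r with ha
  set b := max (min ‖y - p‖ R) r with hb
  have ha' : r ≤ a := le_max_right _ _
  have hb' : r ≤ b := le_max_right _ _
  have hab : |b - a| ≤ ‖x - y‖ := by
    have h1 : |b - a| ≤ |min ‖y - p‖ R - min ‖x - p‖ R| := by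
      have := abs_max_sub_max_le_max (min ‖y - p‖ R) r (min ‖x - p‖ R) r
      simpa using this
    have h2 : |min ‖y - p‖ R - min ‖x - p‖ R| ≤ |‖y - p‖ - ‖x - p‖| := by
      have := abs_min_sub_min_le_max (‖y - p‖) R (‖x - p‖) R
      simpa using this
    have h3 : |‖y - p‖ - ‖x - p‖| ≤ ‖(y - p) - (x - p)‖ := abs_norm_sub_norm_le _ _
    have h4 : ‖(y - p) - (x - p)‖ = ‖x - y‖ := by rw [norm_sub_rev]; congr 1; abel
    linarith
  have hapos : 0 < a := by linarith
  have hbpos : 0 < b := by linarith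
  have e : 1 / a - 1 / R - (1 / b - 1 / R) = (b - a) / (a * b) := by
    have := hapos.ne'
    have := hbpos.ne'
    rw [show 1 / a - 1 / R - (1 / b - 1 / R) = 1 / a - 1 / b by ring]
    field_simp
  rw [e, abs_div, abs_of_pos (mul_pos hapos hbpos), div_eq_mul_one_div, mul_comm]
  gcongr

theorem psi_zero (p : V3) {r R : ℝ} (hrR : r ≤ R) {x : V3} (hx : R ≤ ‖x - p‖) :
    psi p r R x = 0 := by
  simp [psi, min_eq_right hx, max_eq_left hrR]

theorem psi_cpt (p : V3) {r R : ℝ} (hrR : r ≤ R) : HasCompactSupport (psi p r R) := by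
  refine HasCompactSupport.intro (isCompact_closedBall p R) fun x hx => psi_zero p hrR ?_
  rw [mem_closedBall, dist_eq_norm] at hx
  linarith

theorem psi_in (p : V3) {r R : ℝ} (hrR : r ≤ R) {x : V3} (hx : ‖x - p‖ ≤ r) :
    psi p r R x = 1 / r - 1 / R := by
  simp [psi, min_eq_left (hx.trans hrR), max_eq_right hx]

theorem psi_mid (p : V3) {r R : ℝ} {x : V3} (hx : r ≤ ‖x - p‖) (hx' : ‖x - p‖ ≤ R) :
    psi p r R x = 1 / ‖x - p‖ - 1 / R := by
  simp [psi, min_eq_left hx', max_eq_left hx]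

theorem lineDeriv_psi_out (p : V3) {r R : ℝ} (hrR : r ≤ R) {x : V3} (hx : R < ‖x - p‖) (v : V3) :
    lineDeriv ℝ (psi p r R) x v = 0 := by
  have h : psi p r R =ᶠ[𝓝 x] fun _ => (0 : ℝ) := by
    have : ∀ᶠ y in 𝓝 x, R < ‖y - p‖ :=
      (by fun_prop : Continuous fun y : V3 => ‖y - p‖).continuousAt.eventually (lt_mem_nhds hx)
    filter_upwards [this] with y hy using psi_zero p hrR hy.le
  rw [h.lineDeriv_eq]; simp [lineDeriv]

theorem lineDeriv_psi_in (p : V3) {r R : ℝ} (hrR : r ≤ R) {x : V3} (hx : ‖x - p‖ < r) (v : V3) :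
    lineDeriv ℝ (psi p r R) x v = 0 := by
  have h : psi p r R =ᶠ[𝓝 x] fun _ => (1 / r - 1 / R : ℝ) := by
    have : ∀ᶠ y in 𝓝 x, ‖y - p‖ < r :=
      (by fun_prop : Continuous fun y : V3 => ‖y - p‖).continuousAt.eventually (gt_mem_nhds hx)
    filter_upwards [this] with y hy using psi_in p hrR hy.le
  rw [h.lineDeriv_eq]; simp [lineDeriv]

theorem lineDeriv_psi_mid (p : V3) {r R : ℝ} (hr : 0 < r) {x : V3} (hx : r < ‖x - p‖)
    (hx' : ‖x - p‖ < R) (i : Fin 3) :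
    lineDeriv ℝ (psi p r R) x (E3 i) = - (x - p) i / ‖x - p‖ ^ 3 := by
  have h : psi p r R =ᶠ[𝓝 x] fun y => 1 / ‖y - p‖ - 1 / R := by
    have h1 : ∀ᶠ y in 𝓝 x, ‖y - p‖ < R :=
      (by fun_prop : Continuous fun y : V3 => ‖y - p‖).continuousAt.eventually (gt_mem_nhds hx')
    have h2 : ∀ᶠ y in 𝓝 x, r < ‖y - p‖ :=
      (by fun_prop : Continuous fun y : V3 => ‖y - p‖).continuousAt.eventually (lt_mem_nhds hx)
    filter_upwards [h1, h2] with y hy hy' using psi_mid p hy'.le hy.le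
  rw [h.lineDeriv_eq]
  have hpos : 0 < ‖x - p‖ := hr.trans hx
  have hl : HasDerivAt (fun t : ℝ => x + t • E3 i - p) (E3 i) 0 := by
    simpa using (((hasDerivAt_id (0 : ℝ)).smul_const (E3 i)).const_add x).sub_const p
  have hs := hl.norm_sq
  simp only [zero_smul, add_zero] at hs
  have hq := (hs.sqrt (by simpa using hpos.ne')).inv (by simpa using hpos.ne')
  simp only [zero_smul, add_zero, Real.sqrt_sq (norm_nonneg _)] at hq
  refine HasLineDerivAt.lineDeriv ?_
  unfold HasLineDerivAt
  have hq' := hq.sub_const (1 / R)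
  have hin : ⟪x - p, E3 i⟫ = (x - p) i := by
    simp [E3, EuclideanSpace.inner_single_right]
  rw [hin] at hq'
  convert hq' using 1
  · ext t
    simp
  · field_simp

/-- Integration by parts against the radial cutoff. -/
theorem parts (p : V3) {r R : ℝ} (hr : 0 < r) (hrR : r ≤ R) (f : Fin 3 → V3 → ℝ)
    (hf : ∀ i, ∃ C : ℝ≥0, LipschitzWith C (f i)) :
    IntegrableOn (fun x => ∑ i, (lineDeriv ℝ (f i) x (E3 i) * psi p r R x
        + lineDeriv ℝ (psi p r R) x (E3 i) * f i x)) (ball p R) ∧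
    ∫ x in ball p R, ∑ i, (lineDeriv ℝ (f i) x (E3 i) * psi p r R x
        + lineDeriv ℝ (psi p r R) x (E3 i) * f i x) = 0 := by
  obtain ⟨D, hD⟩ := psi_lip p (R := R) hr
  have hc := psi_cpt p hrR
  have hprodInt : ∀ (g h : V3 → ℝ) (C C' : ℝ≥0) (v : V3), LipschitzWith C g → LipschitzWith C' h →
      IntegrableOn (fun x => lineDeriv ℝ g x v * h x) (ball p R) := by
    intro g h C C' v hg hh
    have h1 : IntegrableOn h (ball p R) :=
      (hh.continuous.continuousOn.integrableOn_compact (isCompact_closedBall p R)).mono_set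
        ball_subset_closedBall
    exact Integrable.bdd_mul (c := C * ‖v‖) h1
      (aestronglyMeasurable_lineDeriv hg.continuous _)
      (.of_forall fun _ => norm_lineDeriv_le_of_lipschitz ℝ hg)
  have hsph : ∀ᵐ x : V3, x ∉ sphere p R := by
    exact measure_eq_zero_iff_ae_notMem.1 (Measure.addHaar_sphere (volume : Measure V3) p R)
  have I1 : ∀ i, IntegrableOn (fun x => lineDeriv ℝ (f i) x (E3 i) * psi p r R x) (ball p R) := by
    intro i; obtain ⟨C, hC⟩ := hf i; exact hprodInt _ _ _ _ _ hC hD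
  have I2 : ∀ i, IntegrableOn (fun x => lineDeriv ℝ (psi p r R) x (E3 i) * f i x) (ball p R) := by
    intro i; obtain ⟨C, hC⟩ := hf i; exact hprodInt _ _ _ _ _ hD hC
  refine ⟨integrable_finsetSum _ fun i _ => (I1 i).add (I2 i), ?_⟩
  rw [integral_finsetSum]
  swap
  · exact fun i _ => (I1 i).add (I2 i)
  refine Finset.sum_eq_zero fun i _ => ?_
  rw [integral_add (I1 i) (I2 i)]
  obtain ⟨C, hC⟩ := hf i
  rw [setIntegral_eq_integral_of_ae_compl_eq_zero, setIntegral_eq_integral_of_ae_compl_eq_zero,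
    hC.integral_lineDeriv_mul_eq hD hc]
  · simp only [lineDeriv_neg, neg_mul, integral_neg]; ring
  · filter_upwards [hsph] with x hx hx'
    have : R < ‖x - p‖ := by
      simp only [mem_sphere, mem_ball, dist_eq_norm] at hx hx'
      exact lt_of_le_of_ne (not_lt.1 hx') (Ne.symm hx)
    rw [lineDeriv_psi_out p hrR this, zero_mul]
  · filter_upwards with x hx'
    simp only [mem_ball, dist_eq_norm] at hx'
    rw [psi_zero p hrR (not_lt.1 hx'), mul_zero]

/-- The stress-energy vector field contracted with `x - p`, for a given gradient `G`. -/
def WF (p : V3) (G : V3 → V3 →L[ℝ] V3) (i : Fin 3) (x : V3) : ℝ :=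
  ∑ k : Fin 3, (x - p) k * ⟪G x (E3 i), G x (E3 k)⟫
    - 1 / 2 * ((x - p) i * ∑ k : Fin 3, ⟪G x (E3 k), G x (E3 k)⟫)

theorem WF_ext (p : V3) {R : ℝ} (G : V3 → V3 →L[ℝ] V3) (hR : 0 < R)
    (hG : ContDiffOn ℝ 1 G (closedBall p R)) (i : Fin 3) :
    ∃ f : V3 → ℝ, (∃ C : ℝ≥0, LipschitzWith C f) ∧ Set.EqOn (WF p G i) f (closedBall p R) := by
  have hU : UniqueDiffOn ℝ (closedBall p R) :=
    uniqueDiffOn_convex (convex_closedBall p R)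
      ⟨p, ball_subset_interior_closedBall (mem_ball_self hR)⟩
  have hco : ∀ k : Fin 3, ContDiffOn ℝ 1 (fun x : V3 => (x - p) k) (closedBall p R) := by
    intro k
    have : ContDiff ℝ 1 (fun x : V3 => (x - p) k) :=
      (EuclideanSpace.proj k : V3 →L[ℝ] ℝ).contDiff.comp (contDiff_id.sub contDiff_const)
    exact this.contDiffOn
  have hg : ∀ k : Fin 3, ContDiffOn ℝ 1 (fun x : V3 => G x (E3 k)) (closedBall p R) :=
    fun k => hG.clm_apply contDiffOn_const
  have hW : ContDiffOn ℝ 1 (WF p G i) (closedBall p R) := by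
    unfold WF
    refine ContDiffOn.sub (ContDiffOn.sum fun k _ => (hco k).mul ((hg i).inner ℝ (hg k))) ?_
    exact contDiffOn_const.mul ((hco i).mul (ContDiffOn.sum fun k _ => (hg k).inner ℝ (hg k)))
  have hcont := hW.continuousOn_fderivWithin hU le_rfl
  obtain ⟨C, hC⟩ := (isCompact_closedBall p R).exists_bound_of_continuousOn hcont
  have hL : LipschitzOnWith (Real.toNNReal C) (WF p G i) (closedBall p R) := by
    refine Convex.lipschitzOnWith_of_nnnorm_fderivWithin_le (𝕜 := ℝ)
      (hW.differentiableOn (by norm_num)) (fun x hx => ?_) (convex_closedBall p R)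
    rw [← NNReal.coe_le_coe, coe_nnnorm]
    exact (hC x hx).trans (Real.le_coe_toNNReal C)
  obtain ⟨f, hf, he⟩ := hL.extend_real
  exact ⟨f, ⟨_, hf⟩, he⟩

theorem gradSq_eq (d : V3 → V3) (x : V3) :
    gradSq3 d x = ∑ k : Fin 3, ⟪fderiv ℝ d x (E3 k), fderiv ℝ d x (E3 k)⟫ := by
  unfold gradSq3
  refine Finset.sum_congr rfl fun k _ => ?_
  rw [real_inner_self_eq_norm_sq, EuclideanSpace.real_norm_sq_eq]

theorem div_WF (p : V3) (d : V3 → V3) (x : V3) (hd : ContDiffAt ℝ 2 d x)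
    (hu : ∀ᶠ y in 𝓝 x, ‖d y‖ = 1) :
    ∑ i, lineDeriv ℝ (WF p (fderiv ℝ d) i) x (E3 i) =
      - (1 / 2) * gradSq3 d x
        + ⟪lap3 d x + gradSq3 d x • d x, fderiv ℝ d x (x - p)⟫ := by
  have hdd : DifferentiableAt ℝ (fderiv ℝ d) x :=
    (hd.fderiv_right (m := 1) (by norm_num)).differentiableAt (by norm_num)
  have hsym := hd.isSymmSndFDerivAt (by simp)
  set D : Fin 3 → V3 := fun k => fderiv ℝ d x (E3 k) with hD
  set H : Fin 3 → Fin 3 → V3 := fun k i => fderiv ℝ (fun y => fderiv ℝ d y (E3 k)) x (E3 i) with hH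
  have hHs : ∀ k i, H k i = H i k := by
    intro k i
    have e : ∀ k i, H k i = fderiv ℝ (fderiv ℝ d) x (E3 i) (E3 k) := by
      intro k i
      simp only [hH]
      rw [fderiv_clm_apply hdd (differentiableAt_const _)]
      simp
    rw [e, e]
    exact hsym _ _
  have horth : ∀ v, ⟪d x, fderiv ℝ d x v⟫ = 0 := by
    intro v
    have h1 : HasFDerivAt d (fderiv ℝ d x) x := (hd.differentiableAt (by norm_num)).hasFDerivAt
    have h2 := h1.norm_sq
    have h3 : (fun y => ‖d y‖ ^ 2) =ᶠ[𝓝 x] fun _ => (1 : ℝ) := by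
      filter_upwards [hu] with y hy
      rw [hy]; norm_num
    have h4 := (hasFDerivAt_const (𝕜 := ℝ) (1 : ℝ) x).congr_of_eventuallyEq h3
    have h5 := congrArg (fun L : V3 →L[ℝ] ℝ => L v) (h2.unique h4)
    simpa using h5
  have hgi : ∀ k i, HasDerivAt (fun t : ℝ => fderiv ℝ d (x + t • E3 i) (E3 k)) (H k i) 0 := by
    intro k i
    have : DifferentiableAt ℝ (fun y => fderiv ℝ d y (E3 k)) x :=
      hdd.clm_apply (differentiableAt_const _)
    exact this.hasFDerivAt.hasLineDerivAt (E3 i)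
  have hco : ∀ k i, HasDerivAt (fun t : ℝ => (x + t • E3 i - p) k) (E3 i k) 0 := by
    intro k i
    have : HasDerivAt (fun t : ℝ => x + t • E3 i - p) (E3 i) 0 := by
      simpa using (((hasDerivAt_id (0 : ℝ)).smul_const (E3 i)).const_add x).sub_const p
    exact (EuclideanSpace.proj k : V3 →L[ℝ] ℝ).hasFDerivAt.comp_hasDerivAt (0 : ℝ) this
  have hline : ∀ i, lineDeriv ℝ (WF p (fderiv ℝ d) i) x (E3 i) =
      ∑ k, (E3 i k * ⟪D i, D k⟫ + (x - p) k * (⟪D i, H k i⟫ + ⟪H i i, D k⟫))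
      - 1 / 2 * (E3 i i * ∑ k, ⟪D k, D k⟫ + (x - p) i * ∑ k, (⟪D k, H k i⟫ + ⟪H k i, D k⟫)) := by
    intro i
    refine HasLineDerivAt.lineDeriv ?_
    unfold HasLineDerivAt WF
    have h1 := HasDerivAt.fun_sum (u := Finset.univ) fun k _ =>
      (hco k i).mul ((hgi i i).inner ℝ (hgi k i))
    have h2 := ((hco i i).mul (HasDerivAt.fun_sum (u := Finset.univ) fun k _ =>
      (hgi k i).inner ℝ (hgi k i))).const_mul (1 / 2 : ℝ)
    have h3 := h1.sub h2
    simp only [zero_smul, add_zero] at h3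
    exact h3
  have hx : fderiv ℝ d x (x - p) = ∑ k, (x - p) k • D k := by
    have : x - p = ∑ k, (x - p) k • E3 k := by
      ext j
      fin_cases j <;> simp [E3, Fin.sum_univ_three]
    conv_lhs => rw [this]
    simp only [map_sum, map_smul, hD]
  have hl : lap3 d x = ∑ i, H i i := rfl
  rw [inner_add_left, real_inner_smul_left, horth, mul_zero, add_zero, hx, hl, gradSq_eq]
  simp only [hline]
  have c : ∀ a b : V3, ⟪a, b⟫ = ⟪b, a⟫ := fun a b => real_inner_comm _ _
  change _ = -(1 / 2) * ∑ k, ⟪D k, D k⟫ + _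
  simp only [Fin.sum_univ_three, inner_add_left, inner_add_right, real_inner_smul_right,
    hHs 1 0, hHs 2 0, hHs 2 1, E3, PiLp.single_apply]
  simp only [c (H _ _) (D _)]
  simp
  ring

theorem fderiv_sum_E3 (L : V3 →L[ℝ] V3) (v : V3) : L v = ∑ k, v k • L (E3 k) := by
  have : v = ∑ k, v k • E3 k := by
    ext j
    fin_cases j <;> simp [E3, Fin.sum_univ_three]
  conv_lhs => rw [this]
  simp only [map_sum, map_smul]

theorem radial_WF (p : V3) (d : V3 → V3) (x : V3) :
    ∑ i, (x - p) i * WF p (fderiv ℝ d) i x =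
      ‖fderiv ℝ d x (x - p)‖ ^ 2 - 1 / 2 * (‖x - p‖ ^ 2 * gradSq3 d x) := by
  rw [← real_inner_self_eq_norm_sq, fderiv_sum_E3 (fderiv ℝ d x) (x - p), gradSq_eq,
    EuclideanSpace.real_norm_sq_eq]
  unfold WF
  simp only [Fin.sum_univ_three, inner_add_left, inner_add_right, real_inner_smul_right,
    real_inner_smul_left]
  ring

theorem cs_grad (p : V3) (d : V3 → V3) (x : V3) :
    ‖fderiv ℝ d x (x - p)‖ ^ 2 ≤ ‖x - p‖ ^ 2 * gradSq3 d x := by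
  have h1 : ‖fderiv ℝ d x (x - p)‖ ≤ ∑ k, |(x - p) k| * ‖fderiv ℝ d x (E3 k)‖ := by
    rw [fderiv_sum_E3 (fderiv ℝ d x) (x - p)]
    refine (norm_sum_le _ _).trans (le_of_eq ?_)
    refine Finset.sum_congr rfl fun k _ => ?_
    rw [norm_smul, Real.norm_eq_abs]
  have h2 := Finset.sum_mul_sq_le_sq_mul_sq Finset.univ (fun k => |(x - p) k|)
    (fun k => ‖fderiv ℝ d x (E3 k)‖)
  rw [EuclideanSpace.real_norm_sq_eq (x - p), gradSq_eq]
  simp only [sq_abs, real_inner_self_eq_norm_sq] at h2 ⊢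
  exact (pow_le_pow_left₀ (norm_nonneg _) h1 2).trans h2

theorem gradSq_nonneg (d : V3 → V3) (x : V3) : 0 ≤ gradSq3 d x :=
  Finset.sum_nonneg fun _ _ => Finset.sum_nonneg fun _ _ => sq_nonneg _

theorem bound_in {r R e t w s : ℝ} (hr : 0 < r) (hrR : r ≤ R) (ht : 0 ≤ t)
    (hw : 0 ≤ w) (hwe : w ^ 2 ≤ r ^ 2 * e) (hs : s ≤ t * w) :
    (-(1 / 2) * e + s) * (1 / r - 1 / R) ≤ e / (2 * R) + R * t ^ 2 - e / (4 * r) := by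
  have hR : 0 < R := hr.trans_le hrR
  have hpsi : 0 ≤ 1 / r - 1 / R := sub_nonneg.2 (one_div_le_one_div_of_le hr hrR)
  have hpsi' : 1 / r - 1 / R ≤ 1 / r := by
    have : 0 < 1 / R := by positivity
    linarith
  have h1 : s * (1 / r - 1 / R) ≤ t * w * (1 / r) :=
    (mul_le_mul_of_nonneg_right hs hpsi).trans (mul_le_mul_of_nonneg_left hpsi' (by positivity))
  have h2 : t * w * (1 / r) ≤ r * t ^ 2 + w ^ 2 / (4 * r ^ 3) := by
    have : r * t ^ 2 + w ^ 2 / (4 * r ^ 3) - t * w * (1 / r) = (2 * r ^ 2 * t - w) ^ 2 / (4 * r ^ 3) := by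
      field_simp
      ring
    have h : 0 ≤ (2 * r ^ 2 * t - w) ^ 2 / (4 * r ^ 3) := by positivity
    linarith
  have h3 : w ^ 2 / (4 * r ^ 3) ≤ e / (4 * r) := by
    rw [div_le_div_iff₀ (by positivity) (by positivity)]
    nlinarith [mul_le_mul_of_nonneg_right hwe (by positivity : 0 ≤ 4 * r)]
  have h4 : r * t ^ 2 ≤ R * t ^ 2 := mul_le_mul_of_nonneg_right hrR (sq_nonneg t)
  have h5 : -(1 / 2) * e * (1 / r - 1 / R) = e / (2 * R) - 2 * (e / (4 * r)) := by
    field_simp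
    ring
  nlinarith

theorem bound_out {ρ R e t w s : ℝ} (hr : 0 < ρ) (hrR : ρ ≤ R) (ht : 0 ≤ t)
    (hw : 0 ≤ w) (hs : s ≤ t * w) :
    (-(1 / 2) * e + s) * (1 / ρ - 1 / R) - (w ^ 2 - 1 / 2 * (ρ ^ 2 * e)) / ρ ^ 3
      ≤ e / (2 * R) + R * t ^ 2 := by
  have hR : 0 < R := hr.trans_le hrR
  have hpsi : 0 ≤ 1 / ρ - 1 / R := sub_nonneg.2 (one_div_le_one_div_of_le hr hrR)
  have hpsi' : 1 / ρ - 1 / R ≤ 1 / ρ := by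
    have : 0 < 1 / R := by positivity
    linarith
  have h1 : s * (1 / ρ - 1 / R) ≤ t * w * (1 / ρ) :=
    (mul_le_mul_of_nonneg_right hs hpsi).trans (mul_le_mul_of_nonneg_left hpsi' (by positivity))
  have h2 : t * w * (1 / ρ) ≤ ρ * t ^ 2 + w ^ 2 / (ρ ^ 3) := by
    have : ρ * t ^ 2 + w ^ 2 / (ρ ^ 3) - t * w * (1 / ρ)
        = ((ρ ^ 2 * t - w / 2) ^ 2 + 3 / 4 * w ^ 2) / (ρ ^ 3) := by
      field_simp
      ring
    have h : 0 ≤ ((ρ ^ 2 * t - w / 2) ^ 2 + 3 / 4 * w ^ 2) / (ρ ^ 3) := by positivity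
    linarith
  have h4 : ρ * t ^ 2 ≤ R * t ^ 2 := mul_le_mul_of_nonneg_right hrR (sq_nonneg t)
  have h5 : -(1 / 2) * e * (1 / ρ - 1 / R) - (w ^ 2 - 1 / 2 * (ρ ^ 2 * e)) / ρ ^ 3
      = e / (2 * R) - w ^ 2 / ρ ^ 3 := by
    field_simp
    ring
  nlinarith

/-- The pointwise inequality away from the sphere of radius `r`. -/
theorem pointwise (p : V3) {r R : ℝ} (hr : 0 < r) (hrR : r ≤ R) (d : V3 → V3) (x : V3)
    (f : Fin 3 → V3 → ℝ) (hx : x ∈ ball p R) (hxr : x ∉ sphere p r)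
    (hd : ContDiffAt ℝ 2 d x) (hu : ∀ᶠ y in 𝓝 x, ‖d y‖ = 1)
    (hf : ∀ i, f i =ᶠ[𝓝 x] WF p (fderiv ℝ d) i) :
    ∑ i, (lineDeriv ℝ (f i) x (E3 i) * psi p r R x
        + lineDeriv ℝ (psi p r R) x (E3 i) * f i x)
      ≤ gradSq3 d x / (2 * R) + R * ‖lap3 d x + gradSq3 d x • d x‖ ^ 2
        - (ball p r).indicator (fun y => gradSq3 d y / (4 * r)) x := by
  have hdiv := div_WF p d x hd hu
  have e1 : ∀ i, lineDeriv ℝ (f i) x (E3 i) = lineDeriv ℝ (WF p (fderiv ℝ d) i) x (E3 i) :=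
    fun i => (hf i).lineDeriv_eq
  have e2 : ∀ i, f i x = WF p (fderiv ℝ d) i x := fun i => (hf i).eq_of_nhds
  simp only [e1, e2]
  rw [Finset.sum_add_distrib, ← Finset.sum_mul, hdiv]
  have hs := real_inner_le_norm (lap3 d x + gradSq3 d x • d x) (fderiv ℝ d x (x - p))
  rw [mem_ball, dist_eq_norm] at hx
  rw [mem_sphere, dist_eq_norm] at hxr
  rcases lt_or_gt_of_ne hxr with h | h
  · have hm : x ∈ ball p r := by rwa [mem_ball, dist_eq_norm]
    rw [Set.indicator_of_mem hm]
    simp only [lineDeriv_psi_in p hrR h, zero_mul, Finset.sum_const_zero, add_zero]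
    rw [psi_in p hrR h.le]
    refine bound_in hr hrR (norm_nonneg _) (norm_nonneg _) ?_ hs
    refine (cs_grad p d x).trans (mul_le_mul_of_nonneg_right ?_ (gradSq_nonneg d x))
    exact pow_le_pow_left₀ (norm_nonneg _) h.le 2
  · have hm : x ∉ ball p r := by
      rw [mem_ball, dist_eq_norm]
      exact not_lt.2 h.le
    rw [Set.indicator_of_notMem hm, sub_zero, psi_mid p h.le hx.le]
    have : ∑ i, lineDeriv ℝ (psi p r R) x (E3 i) * WF p (fderiv ℝ d) i x
        = - ((‖fderiv ℝ d x (x - p)‖ ^ 2 - 1 / 2 * (‖x - p‖ ^ 2 * gradSq3 d x)) / ‖x - p‖ ^ 3) := by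
      rw [← radial_WF, Finset.sum_div, ← Finset.sum_neg_distrib]
      refine Finset.sum_congr rfl fun i _ => ?_
      rw [lineDeriv_psi_mid p hr h hx]
      ring
    rw [this, ← sub_eq_add_neg]
    exact bound_out (hr.trans h) hx.le (norm_nonneg _) (norm_nonneg _) hs

theorem integrable_aux (p : V3) {R : ℝ} (hR : 0 < R) (d : V3 → V3)
    (hd : ContDiffOn ℝ 2 d (closedBall p R)) :
    IntegrableOn (gradSq3 d) (ball p R) ∧
    IntegrableOn (fun x => ‖lap3 d x + gradSq3 d x • d x‖ ^ 2) (ball p R) := by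
  have hU : UniqueDiffOn ℝ (closedBall p R) :=
    uniqueDiffOn_convex (convex_closedBall p R)
      ⟨p, ball_subset_interior_closedBall (mem_ball_self hR)⟩
  set S := closedBall p R with hS
  set G := fderivWithin ℝ d S with hG
  have hnh : ∀ x ∈ ball p R, S ∈ 𝓝 x := fun x hx =>
    mem_of_superset (isOpen_ball.mem_nhds hx) ball_subset_closedBall
  have hGc : ContDiffOn ℝ 1 G S := hd.fderivWithin hU (by norm_num)
  have hGk : ∀ k, ContDiffOn ℝ 1 (fun x => G x (E3 k)) S := fun k => hGc.clm_apply contDiffOn_const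
  have hGe : ∀ x ∈ ball p R, G x = fderiv ℝ d x := fun x hx => fderivWithin_of_mem_nhds (hnh x hx)
  let g : V3 → ℝ := fun x => ∑ k, ⟪G x (E3 k), G x (E3 k)⟫
  let l : V3 → V3 := fun x => ∑ k, fderivWithin ℝ (fun y => G y (E3 k)) S x (E3 k)
  have hg : ContinuousOn g S := continuousOn_finsetSum _ fun k _ =>
    (hGk k).continuousOn.inner (𝕜 := ℝ) (hGk k).continuousOn
  have hl : ContinuousOn l S := continuousOn_finsetSum _ fun k _ =>
    ((hGk k).continuousOn_fderivWithin hU le_rfl).clm_apply continuousOn_const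
  have hge : ∀ x ∈ ball p R, g x = gradSq3 d x := by
    intro x hx
    simp only [g]
    rw [hGe x hx, gradSq_eq]
  have hle : ∀ x ∈ ball p R, l x = lap3 d x := by
    intro x hx
    simp only [l]
    unfold lap3
    refine Finset.sum_congr rfl fun k _ => ?_
    rw [fderivWithin_of_mem_nhds (hnh x hx)]
    have : (fun y => G y (E3 k)) =ᶠ[𝓝 x] fun y => fderiv ℝ d y (E3 k) := by
      filter_upwards [isOpen_ball.mem_nhds hx] with y hy
      rw [hGe y hy]
    rw [this.fderiv_eq]
  have key : ∀ F F' : V3 → ℝ, ContinuousOn F S → (∀ x ∈ ball p R, F x = F' x) →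
      IntegrableOn F' (ball p R) := by
    intro F F' hF he
    exact ((hF.integrableOn_compact (isCompact_closedBall p R)).mono_set
      ball_subset_closedBall).congr_fun he measurableSet_ball
  refine ⟨key g _ hg hge, key (fun x => ‖l x + g x • d x‖ ^ 2) _ ?_ ?_⟩
  · exact (hl.add (hg.smul hd.continuousOn)).norm.pow 2
  · intro x hx
    change ‖l x + g x • d x‖ ^ 2 = _
    rw [hge x hx, hle x hx]

/-- Almost-monotonicity of the scale-normalized Dirichlet energy for approximated harmonic
maps into `S²`: if `‖d‖ ≡ 1` on the closed ball, `τ = Δd + |∇d|² d`, and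
`∫_{B_R(p₀)} ‖τ‖² ≤ Λ`, then for `0 < r ≤ R`,
`r⁻¹ ∫_{B_r} |∇d|² ≤ 2R⁻¹ ∫_{B_R} |∇d|² + 4ΛR`. -/
theorem stmt_15 (Λ R : ℝ) (hΛ : 0 ≤ Λ) (hR : 0 < R) (p₀ : EuclideanSpace ℝ (Fin 3))
    (d : EuclideanSpace ℝ (Fin 3) → EuclideanSpace ℝ (Fin 3))
    (hd : ContDiffOn ℝ (⊤ : ℕ∞) d (Metric.closedBall p₀ R))
    (hunit : ∀ x ∈ Metric.closedBall p₀ R, ‖d x‖ = 1)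
    (hτ : (∫ x in Metric.ball p₀ R, ‖lap3 d x + gradSq3 d x • d x‖ ^ 2) ≤ Λ) :
    ∀ r : ℝ, 0 < r → r ≤ R →
      (1 / r) * (∫ x in Metric.ball p₀ r, gradSq3 d x) ≤
        (2 / R) * (∫ x in Metric.ball p₀ R, gradSq3 d x) + 4 * Λ * R := by
  intro r hr hrR
  have hd2 : ContDiffOn ℝ 2 d (closedBall p₀ R) := hd.of_le (WithTop.coe_le_coe.2 (le_top : (2 : ℕ∞) ≤ ⊤))
  obtain ⟨Ie, It⟩ := integrable_aux p₀ hR d hd2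
  have hU : UniqueDiffOn ℝ (closedBall p₀ R) :=
    uniqueDiffOn_convex (convex_closedBall p₀ R)
      ⟨p₀, ball_subset_interior_closedBall (mem_ball_self hR)⟩
  have hnh : ∀ x ∈ ball p₀ R, closedBall p₀ R ∈ 𝓝 x := fun x hx =>
    mem_of_superset (isOpen_ball.mem_nhds hx) ball_subset_closedBall
  have hGc : ContDiffOn ℝ 1 (fderivWithin ℝ d (closedBall p₀ R)) (closedBall p₀ R) :=
    hd2.fderivWithin hU (by norm_num)
  choose f hfL hfe using WF_ext p₀ _ hR hGc
  obtain ⟨hI, hz⟩ := parts p₀ hr hrR f hfL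
  have hfe' : ∀ x ∈ ball p₀ R, ∀ i, f i =ᶠ[𝓝 x] WF p₀ (fderiv ℝ d) i := by
    intro x hx i
    filter_upwards [isOpen_ball.mem_nhds hx] with y hy
    rw [← hfe i (ball_subset_closedBall hy)]
    unfold WF
    rw [fderivWithin_of_mem_nhds (hnh y hy)]
  have hsph : ∀ᵐ x : V3, x ∉ sphere p₀ r :=
    measure_eq_zero_iff_ae_notMem.1 (Measure.addHaar_sphere (volume : Measure V3) p₀ r)
  have Ii : IntegrableOn ((ball p₀ r).indicator (fun y => gradSq3 d y / (4 * r))) (ball p₀ R) :=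
    (Integrable.div_const Ie (4 * r)).indicator measurableSet_ball
  have Ie' : IntegrableOn (fun x => gradSq3 d x / (2 * R)) (ball p₀ R) := Integrable.div_const Ie _
  have It' : IntegrableOn (fun x => R * ‖lap3 d x + gradSq3 d x • d x‖ ^ 2) (ball p₀ R) :=
    Integrable.const_mul It R
  have hmono : (0 : ℝ) ≤ ∫ x in ball p₀ R, (gradSq3 d x / (2 * R)
      + R * ‖lap3 d x + gradSq3 d x • d x‖ ^ 2
        - (ball p₀ r).indicator (fun y => gradSq3 d y / (4 * r)) x) := by
    rw [← hz]
    refine integral_mono_ae hI ((Ie'.add It').sub Ii) ?_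
    filter_upwards [ae_restrict_mem measurableSet_ball, ae_restrict_of_ae hsph] with x hx hxr
    refine pointwise p₀ hr hrR d x f hx hxr (hd2.contDiffAt (hnh x hx)) ?_ (hfe' x hx)
    filter_upwards [hnh x hx] with y hy using hunit y hy
  have hEq : ∫ x in ball p₀ R, (gradSq3 d x / (2 * R)
      + R * ‖lap3 d x + gradSq3 d x • d x‖ ^ 2
        - (ball p₀ r).indicator (fun y => gradSq3 d y / (4 * r)) x)
      = (∫ x in ball p₀ R, gradSq3 d x) / (2 * R)
        + R * (∫ x in ball p₀ R, ‖lap3 d x + gradSq3 d x • d x‖ ^ 2)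
        - (∫ x in ball p₀ r, gradSq3 d x) / (4 * r) := by
    have h1 := integral_sub (Ie'.add It') Ii
    have h2 := integral_add Ie' It'
    have h3 : ∫ x in ball p₀ R, (ball p₀ r).indicator (fun y => gradSq3 d y / (4 * r)) x
        = (∫ x in ball p₀ r, gradSq3 d x) / (4 * r) := by
      rw [setIntegral_indicator measurableSet_ball,
        Set.inter_eq_right.2 (ball_subset_ball hrR), integral_div]
    rw [integral_div, integral_const_mul] at h2
    rw [← h2, ← h3]
    exact h1
  rw [hEq] at hmono
  have h6 := mul_le_mul_of_nonneg_left hτ hR.le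
  have h7 : (∫ x in ball p₀ r, gradSq3 d x) / (4 * r)
      = 1 / 4 * ((1 / r) * (∫ x in ball p₀ r, gradSq3 d x)) := by
    field_simp
  have h8 : (∫ x in ball p₀ R, gradSq3 d x) / (2 * R)
      = 1 / 4 * ((2 / R) * (∫ x in ball p₀ R, gradSq3 d x)) := by
    field_simp
    norm_num
  rw [h7, h8] at hmono
  linarith

end
end
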